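/- Let Q be a hereditary graph class with Q̂ nonempty, and let s = sup_{W∈Q̂} Ent(W). Then for every ε > 0 there exists N such that for all n ≥ N, 2^{(s-ε)·C(n,2)} ≤ |Q_n| ≤ 2^{(s+ε)·C(n,2)}, where |Q_n| is the number of labelled graphs on {1,…,n} in Q and C(n,2) = n(n-1)/2. -/

import Mathlib

open MeasureTheory Set Filter

noncomputable section

/-- A graphon: a symmetric measurable function `ℝ → ℝ → ℝ` with values in `[0,1]`
(only its values on `[0,1]²` matter). -/
def IsGraphon (W : ℝ → ℝ → ℝ) : Prop :=
  (∀ x y, W x y = W y x) ∧ Measurable (Function.uncurry W) ∧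
    ∀ x y, W x y ∈ Set.Icc (0 : ℝ) 1

/-- The cut norm `‖U‖_□`, the supremum over measurable `S, T ⊆ [0,1]` of
`|∫_{S×T} U|`. -/
def cutNorm (U : ℝ → ℝ → ℝ) : ℝ :=
  sSup { r : ℝ | ∃ S T : Set ℝ, MeasurableSet S ∧ MeasurableSet T ∧
    S ⊆ Set.Icc 0 1 ∧ T ⊆ Set.Icc 0 1 ∧
    r = |∫ p in S ×ˢ T, U p.1 p.2| }

/-- `d_□(W₁, W₂) = ‖W₁ - W₂‖_□`. -/
def dCut (W₁ W₂ : ℝ → ℝ → ℝ) : ℝ := cutNorm (fun x y => W₁ x y - W₂ x y)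

/-- A Lebesgue-measure-preserving map `[0,1] → [0,1]`. -/
def IsMPSelf (σ : ℝ → ℝ) : Prop :=
  MeasureTheory.MeasurePreserving σ
      (MeasureTheory.volume.restrict (Set.Icc (0:ℝ) 1))
      (MeasureTheory.volume.restrict (Set.Icc (0:ℝ) 1)) ∧
    Set.MapsTo σ (Set.Icc (0:ℝ) 1) (Set.Icc (0:ℝ) 1)

/-- The cut distance `δ_□(W₁, W₂)`. -/
def deltaCut (W₁ W₂ : ℝ → ℝ → ℝ) : ℝ :=
  sInf { r : ℝ | ∃ σ₁ σ₂ : ℝ → ℝ, IsMPSelf σ₁ ∧ IsMPSelf σ₂ ∧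
    r = cutNorm (fun x y => W₁ (σ₁ x) (σ₁ y) - W₂ (σ₂ x) (σ₂ y)) }

/-- The binary entropy function `h` (base-2 logarithm; `logb 2 0 = 0` by convention,
so `h 0 = h 1 = 0`). -/
def binEnt (x : ℝ) : ℝ := -x * Real.logb 2 x - (1 - x) * Real.logb 2 (1 - x)

/-- `h̃ x = h (min x (1/2))`. -/
def htilde (x : ℝ) : ℝ := binEnt (min x (1/2))

/-- The entropy `Ent(W) = ∫₀¹∫₀¹ h(W(x,y)) dx dy` of a graphon. -/
def graphonEnt (W : ℝ → ℝ → ℝ) : ℝ :=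
  ∫ x in Set.Icc (0:ℝ) 1, ∫ y in Set.Icc (0:ℝ) 1, binEnt (W x y)

open Classical in
/-- The graphon `W_G` of a simple graph `G` on `{1, …, n}` (vertices as `Fin n`,
vertex `i : Fin n` representing `i+1`): `W_G x y = 1` iff `⌈nx⌉⌈ny⌉ ∈ E(G)`. -/
def graphonOfGraph {n : ℕ} (G : SimpleGraph (Fin n)) : ℝ → ℝ → ℝ := fun x y =>
  if ∃ i j : Fin n, G.Adj i j ∧ ⌈(n : ℝ) * x⌉ = ((i : ℕ) : ℤ) + 1 ∧
      ⌈(n : ℝ) * y⌉ = ((j : ℕ) : ℤ) + 1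
  then 1 else 0

/-- A labelled graph class: a set of graphs on `{1,…,n}` for each `n`. -/
abbrev GraphClass := ∀ n : ℕ, Set (SimpleGraph (Fin n))

/-- A graph class is closed under relabelling by permutations. -/
def IsGraphClass (Q : GraphClass) : Prop :=
  ∀ (n : ℕ) (π : Equiv.Perm (Fin n)) (G : SimpleGraph (Fin n)),
    G ∈ Q n → G.comap ⇑π ∈ Q n

/-- A hereditary graph class: a graph class closed under taking induced subgraphs
(relabelled by the order-preserving bijection). -/
def IsHereditary (Q : GraphClass) : Prop :=
  IsGraphClass Q ∧
    ∀ (m n : ℕ) (f : Fin m → Fin n), StrictMono f →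
      ∀ G ∈ Q n, G.comap f ∈ Q m

/-- `Q̂`: the set of graphons which are limits (in cut distance) of sequences of graphs in
the class `Q` whose orders tend to infinity. -/
def limitSet (Q : GraphClass) : Set (ℝ → ℝ → ℝ) :=
  { W | IsGraphon W ∧
    ∃ (nk : ℕ → ℕ) (Gk : ∀ k, SimpleGraph (Fin (nk k))),
      (∀ k, Gk k ∈ Q (nk k)) ∧ Filter.Tendsto nk Filter.atTop Filter.atTop ∧
      Filter.Tendsto (fun k => deltaCut (graphonOfGraph (Gk k)) W) Filter.atTop (nhds 0) }

/-- `C(n,2) = n(n-1)/2` as a real number. -/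
def choose2 (n : ℕ) : ℝ := (n : ℝ) * ((n : ℝ) - 1) / 2

open Classical in
/-- The step function `E[W | P]` obtained by averaging `W` over the products of the
parts of the partition `P` of `[0,1]`. -/
def condExpPart {k : ℕ} (P : Fin k → Set ℝ) (W : ℝ → ℝ → ℝ) : ℝ → ℝ → ℝ := fun x y =>
  ∑ i : Fin k, ∑ j : Fin k,
    if x ∈ P i ∧ y ∈ P j then ⨍ p in (P i) ×ˢ (P j), W p.1 p.2 else 0

/-- `W̄_n`: the step function of `W` for the partition of `[0,1]` into `n` consecutive
intervals of length `1/n`. -/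
def barStep (n : ℕ) (W : ℝ → ℝ → ℝ) : ℝ → ℝ → ℝ :=
  condExpPart (fun i : Fin n => Set.Ioc (((i : ℕ) : ℝ)/n) ((((i : ℕ) : ℝ) + 1)/n)) W

/-- `N̂_□(n, δ; W)`: the number of graphs `G` on `{1,…,n}` with `d_□(W_G, W) ≤ δ`. -/
def NhatCut (n : ℕ) (δ : ℝ) (W : ℝ → ℝ → ℝ) : ℕ :=
  Nat.card {G : SimpleGraph (Fin n) // dCut (graphonOfGraph G) W ≤ δ}

/-- `N_□(n, δ; W)`: the number of graphs `G` on `{1,…,n}` with `δ_□(W_G, W) ≤ δ`. -/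
def NCut (n : ℕ) (δ : ℝ) (W : ℝ → ℝ → ℝ) : ℕ :=
  Nat.card {G : SimpleGraph (Fin n) // deltaCut (graphonOfGraph G) W ≤ δ}

open Classical in
/-- The induced density `p(F; W)` of a graph `F` on `{1,…,k}` in a graphon `W`. -/
def inducedDensity {k : ℕ} (F : SimpleGraph (Fin k)) (W : ℝ → ℝ → ℝ) : ℝ :=
  ∫ x : Fin k → ℝ in Set.univ.pi (fun _ : Fin k => Set.Icc (0:ℝ) 1),
    ∏ i : Fin k, ∏ j : Fin k,
      if i < j then (if F.Adj i j then W (x i) (x j) else 1 - W (x i) (x j)) else 1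

open Classical in
/-- The randomness support graphon `1_{rand(W)}` of `W`. -/
def randIndicator (W : ℝ → ℝ → ℝ) : ℝ → ℝ → ℝ := fun x y =>
  if 0 < W x y ∧ W x y < 1 then 1 else 0

/-- A kernel `U` is `K_r`-free if `∏_{i<j} U(x_i, x_j) = 0` for a.e. `x ∈ [0,1]^r`. -/
def KFree (r : ℕ) (U : ℝ → ℝ → ℝ) : Prop :=
  ∀ᵐ x ∂(MeasureTheory.volume.restrict (Set.univ.pi fun _ : Fin r => Set.Icc (0:ℝ) 1)),
    (∏ i : Fin r, ∏ j : Fin r, if i < j then U (x i) (x j) else 1) = 0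

open Classical in
/-- The graphon `W^{(r,s)}`: equal to `1/2` off the diagonal blocks, `1` on the first `s`
diagonal blocks `I_i × I_i`, and `0` on the remaining diagonal blocks. -/
def Wrs (r s : ℕ) : ℝ → ℝ → ℝ := fun x y =>
  if ∃ i j : Fin r, i ≠ j ∧ x ∈ Set.Ioc (((i:ℕ):ℝ)/r) ((((i:ℕ):ℝ)+1)/r) ∧
      y ∈ Set.Ioc (((j:ℕ):ℝ)/r) ((((j:ℕ):ℝ)+1)/r)
  then 1/2
  else if ∃ i : Fin r, (i:ℕ) < s ∧ x ∈ Set.Ioc (((i:ℕ):ℝ)/r) ((((i:ℕ):ℝ)+1)/r) ∧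
      y ∈ Set.Ioc (((i:ℕ):ℝ)/r) ((((i:ℕ):ℝ)+1)/r)
  then 1 else 0

/-- `E_r = ⋃_{i ≠ j} I_i × I_j` where `I_i`, `i = 1, …, r`, are the consecutive
intervals of length `1/r` in `[0,1]`. -/
def Er (r : ℕ) : Set (ℝ × ℝ) :=
  ⋃ (i : Fin r) (j : Fin r) (_ : i ≠ j),
    (Set.Ioc (((i:ℕ):ℝ)/r) ((((i:ℕ):ℝ)+1)/r)) ×ˢ (Set.Ioc (((j:ℕ):ℝ)/r) ((((j:ℕ):ℝ)+1)/r))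

/-- `R_r`: the set of graphons equal to `1/2` on `E_r` and `{0,1}`-valued elsewhere
on `[0,1]²`. -/
def Rset (r : ℕ) : Set (ℝ → ℝ → ℝ) :=
  { W | IsGraphon W ∧ (∀ p ∈ Er r, W p.1 p.2 = 1/2) ∧
      ∀ p ∈ ((Set.Icc (0:ℝ) 1) ×ˢ (Set.Icc (0:ℝ) 1)) \ Er r,
        W p.1 p.2 = 0 ∨ W p.1 p.2 = 1 }

/-- A graphon is random-free if it is `{0,1}`-valued a.e. on `[0,1]²`. -/
def IsRandomFree (W : ℝ → ℝ → ℝ) : Prop :=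
  ∀ᵐ p ∂(MeasureTheory.volume.restrict ((Set.Icc (0:ℝ) 1) ×ˢ (Set.Icc (0:ℝ) 1))),
    W (Prod.fst p) (Prod.snd p) = 0 ∨ W (Prod.fst p) (Prod.snd p) = 1

/-!
Both bounds compare `|Q n|` with the entropy of a random graph with independent edges.

*Upper bound.* Refine a partition of the vertices of `G ∈ Q n` greedily, each time along a pair of
vertex sets on which the block densities of `G` are off by a fixed amount. Each refinement raises
the energy of the block densities, so the number of parts needed for a given cut norm accuracy does
not depend on `n`. By pigeonhole at least `|Q n| / 2^{O(n)}` graphs of `Q n` have the same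
partitions and the same numbers of edges between parts. All these graphs are equally likely in
the random graph with these block densities, so they number at most `2` to the entropy of the block
densities. If `|Q n| > 2^{t C(n,2)}` for infinitely many `n`, then, once the parts are sorted into
intervals, a compactness argument gives a limit graphon of `Q` of entropy at least `t`.

*Lower bound.* By the counting lemma the induced densities of graphs outside `Q` vanish in every
`W ∈ Q̂`: in a large graph from `Q` they can only come from repeated vertices. So the random graph
sampled from `W` almost surely lies in `Q n`. Given the vertex labels, its entropy is at most
`log₂ |Q n|`, and the mean of this entropy over the labels is `C(n,2) Ent(W)`.
-/

open scoped BigOperators Finset Topology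

/-! ### Averaging over the fibres of a colouring -/

section FiberMean

variable {ι κ κ' : Type*} [Fintype ι] [DecidableEq κ] [DecidableEq κ']

/-- The mean of `A` over the colour class `C ⁻¹' {k}`, with value `0` if that class is empty. -/
def fiberMean (A : ι → ℝ) (C : ι → κ) (k : κ) : ℝ :=
  𝔼 q with C q = k, A q

/-- The conditional mean of `A` given the colouring `C`: each value of `A` is replaced by the mean
of `A` over the colour class it lies in. -/
def condMean (A : ι → ℝ) (C : ι → κ) (q : ι) : ℝ :=
  fiberMean A C (C q)

theorem sum_condMean_mul_comp (A : ι → ℝ) (C : ι → κ) (ψ : κ → ℝ) :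
    ∑ q, condMean A C q * ψ (C q) = ∑ q, A q * ψ (C q) := by
  have hC : ∀ q ∈ (Finset.univ : Finset ι), C q ∈ Finset.univ.image C :=
    fun q hq => Finset.mem_image_of_mem C hq
  rw [← Finset.sum_fiberwise_of_maps_to hC, ← Finset.sum_fiberwise_of_maps_to hC]
  refine Finset.sum_congr rfl fun k _ => ?_
  calc ∑ q with C q = k, condMean A C q * ψ (C q)
      = ∑ q with C q = k, fiberMean A C k * ψ k :=
        Finset.sum_congr rfl fun q hq => by rw [condMean, (Finset.mem_filter.1 hq).2]
    _ = (∑ q with C q = k, A q) * ψ k := by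
        rw [Finset.sum_const, ← smul_mul_assoc, fiberMean, Finset.card_smul_expect]
    _ = ∑ q with C q = k, A q * ψ (C q) := by
        rw [Finset.sum_mul]
        exact Finset.sum_congr rfl fun q hq => by rw [(Finset.mem_filter.1 hq).2]

theorem fiberMean_mem_Icc {A : ι → ℝ} (hA : ∀ q, A q ∈ Icc (0 : ℝ) 1) (C : ι → κ) (k : κ) :
    fiberMean A C k ∈ Icc (0 : ℝ) 1 := by
  refine ⟨Finset.expect_nonneg fun q _ => (hA q).1, ?_⟩
  rcases (Finset.univ.filter fun q => C q = k).eq_empty_or_nonempty with h | h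
  · simp [fiberMean, h]
  · exact Finset.expect_le h fun q _ => (hA q).2

theorem condMean_one_sub (A : ι → ℝ) (C : ι → κ) (q : ι) :
    condMean (fun q' => 1 - A q') C q = 1 - condMean A C q := by
  rw [condMean, fiberMean, Finset.expect_sub_distrib, Finset.expect_const ⟨q, by simp⟩]
  rfl

theorem condMean_pos {A : ι → ℝ} (hA : ∀ q, 0 ≤ A q) (C : ι → κ) {q : ι} (hq : 0 < A q) :
    0 < condMean A C q :=
  Finset.expect_pos' (fun q' _ => hA q') ⟨q, by simp, hq⟩

theorem fiberMean_comp_equiv {ι' : Type*} [Fintype ι'] (e : ι' ≃ ι) (A : ι → ℝ) (C : ι → κ)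
    (k : κ) : fiberMean (A ∘ e) (C ∘ e) k = fiberMean A C k :=
  Finset.expect_equiv e (by simp) (by simp)

theorem sum_sq_condMean_sub {A : ι → ℝ} {C : ι → κ} {C' : ι → κ'} (r : κ → κ') (hr : C' = r ∘ C) :
    ∑ q, (condMean A C q - condMean A C' q) ^ 2
      = ∑ q, condMean A C q ^ 2 - ∑ q, condMean A C' q ^ 2 := by
  have cross : ∑ q, condMean A C q * condMean A C' q = ∑ q, condMean A C' q ^ 2 := by
    have fine := sum_condMean_mul_comp A C fun k => fiberMean A C' (r k)
    have coarse := sum_condMean_mul_comp A C' (fiberMean A C')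
    subst hr
    simpa only [condMean, Function.comp_apply, sq] using fine.trans coarse.symm
  simp only [sub_sq, Finset.sum_add_distrib, Finset.sum_sub_distrib, mul_assoc, ← Finset.mul_sum,
    cross]
  ring

theorem sq_sum_sub_condMean_mul_le {A : ι → ℝ} {C : ι → κ} {C' : ι → κ'} (r : κ → κ')
    (hr : C' = r ∘ C) {ψ : κ → ℝ} (hψ : ∀ k, ψ k ^ 2 ≤ 1) :
    (∑ q, (A q - condMean A C' q) * ψ (C q)) ^ 2
      ≤ Fintype.card ι * (∑ q, condMean A C q ^ 2 - ∑ q, condMean A C' q ^ 2) := by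
  have replace_A : ∑ q, (A q - condMean A C' q) * ψ (C q)
      = ∑ q, (condMean A C q - condMean A C' q) * ψ (C q) := by
    simp only [sub_mul, Finset.sum_sub_distrib, sum_condMean_mul_comp A C ψ]
  have sum_sq_ψ : ∑ q, ψ (C q) ^ 2 ≤ Fintype.card ι := by
    simpa using Finset.sum_le_card_nsmul Finset.univ _ 1 fun q _ => hψ (C q)
  calc (∑ q, (A q - condMean A C' q) * ψ (C q)) ^ 2
      ≤ (∑ q, (condMean A C q - condMean A C' q) ^ 2) * ∑ q, ψ (C q) ^ 2 := by
        rw [replace_A]; exact Finset.sum_mul_sq_le_sq_mul_sq _ _ _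
    _ ≤ (∑ q, (condMean A C q - condMean A C' q) ^ 2) * Fintype.card ι := by gcongr
    _ = _ := by rw [sum_sq_condMean_sub r hr, mul_comm]

end FiberMean

/-! ### Refining chains of vertex colourings -/

section RefiningChain

variable {V : Type*}

/-- The sum of `A` over the combinatorial rectangle `S ×ˢ T`. -/
def boxSum (A : V × V → ℝ) (S T : Finset V) : ℝ :=
  ∑ p ∈ S ×ˢ T, A p

theorem boxSum_comp_equiv {V' : Type*} (e : V' ≃ V) (A : V × V → ℝ)
    (S T : Finset V') :
    boxSum (A ∘ Prod.map e e) S T = boxSum A (S.map e.toEmbedding) (T.map e.toEmbedding) := by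
  rw [boxSum, boxSum, ← Finset.prodMap_map_product, Finset.sum_map]
  rfl

variable [Fintype V]

/-- The mean of `A` over the block `c ⁻¹' {c p.1} ×ˢ c ⁻¹' {c p.2}` containing the pair `p`. -/
def blockMean (A : V × V → ℝ) (c : V → ℕ) : V × V → ℝ :=
  condMean A (Prod.map c c)

/-- The energy of a vertex colouring, the potential function of the weak regularity lemma. -/
def blockEnergy (A : V × V → ℝ) (c : V → ℕ) : ℝ :=
  ∑ p, blockMean A c p ^ 2

/-- A chain of vertex colourings as produced by the greedy proof of the weak regularity lemma: the
colours at level `l` are the `l`-digit numbers in base `4`, going down a level forgets the last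
digit, and the cut distance between `A` and its block means at level `l` is controlled by
the energy gained at the next level. -/
structure IsRefiningChain (A : V × V → ℝ) (c : ℕ → V → ℕ) : Prop where
  lt : ∀ l v, c l v < 4 ^ l
  succ_div : ∀ l v, c (l + 1) v / 4 = c l v
  sq_boxSum_le : ∀ l S T, boxSum (A - blockMean A (c l)) S T ^ 2
    ≤ (Fintype.card V : ℝ) ^ 2 * (blockEnergy A (c (l + 1)) - blockEnergy A (c l))

theorem boxSum_eq_sum_ite [DecidableEq V] (A : V × V → ℝ) (S T : Finset V) :
    boxSum A S T = ∑ p, A p * ((if p.1 ∈ S then 1 else 0) * (if p.2 ∈ T then 1 else 0)) := by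
  simp [boxSum, Finset.sum_product_right, Fintype.sum_prod_type_right]

theorem sq_boxSum_sub_blockMean_le [DecidableEq V] (A : V × V → ℝ) (c : V → ℕ) (S T : Finset V) :
    boxSum (A - blockMean A c) S T ^ 2 ≤ (Fintype.card V : ℝ) ^ 2 *
      (blockEnergy A (fun v => 4 * c v + (if v ∈ S then 2 else 0) + (if v ∈ T then 1 else 0))
        - blockEnergy A c) := by
  set c' : V → ℕ := fun v => 4 * c v + (if v ∈ S then 2 else 0) + (if v ∈ T then 1 else 0)
  have coarsen : Prod.map c c = Prod.map (· / 4) (· / 4) ∘ Prod.map c' c' := by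
    ext p <;> simp only [c', Prod.map, Function.comp_apply] <;> split_ifs <;> omega
  have mem_S v : c' v / 2 % 2 = 1 ↔ v ∈ S := by
    simp only [c']; split_ifs <;> simp_all <;> omega
  have mem_T v : c' v % 2 = 1 ↔ v ∈ T := by
    simp only [c']; split_ifs <;> simp_all <;> omega
  have increment := sq_sum_sub_condMean_mul_le (A := A) (Prod.map (· / 4) (· / 4)) coarsen
    (ψ := fun k => (if k.1 / 2 % 2 = 1 then 1 else 0) * (if k.2 % 2 = 1 then 1 else 0))
    (fun k => by split_ifs <;> norm_num)
  rw [boxSum_eq_sum_ite]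
  unfold blockEnergy blockMean
  simp only [Pi.sub_apply]
  simpa only [Prod.map_fst, Prod.map_snd, mem_S, mem_T, Fintype.card_prod, Nat.cast_mul,
    ← sq (Fintype.card V : ℝ)] using increment

/-- Each step splits every colour class along a rectangle on which `A` deviates most from its block
means. -/
theorem exists_isRefiningChain (A : V × V → ℝ) : ∃ c, IsRefiningChain A c := by
  classical
  have exists_max (c : V → ℕ) : ∃ R : Finset V × Finset V, ∀ S T,
      |boxSum (A - blockMean A c) S T| ≤ |boxSum (A - blockMean A c) R.1 R.2| :=
    (Finite.exists_max fun R : Finset V × Finset V =>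
      |boxSum (A - blockMean A c) R.1 R.2|).imp fun R hR S T => hR (S, T)
  choose R hR using exists_max
  let refine (c : V → ℕ) (v : V) : ℕ :=
    4 * c v + (if v ∈ (R c).1 then 2 else 0) + (if v ∈ (R c).2 then 1 else 0)
  let c (l : ℕ) : V → ℕ := refine^[l] 0
  have c_succ l v : c (l + 1) v = refine (c l) v := by
    simp only [c, Function.iterate_succ_apply']
  refine ⟨c, fun l v => ?_, fun l v => ?_, fun l S T => ?_⟩
  · induction l with
    | zero => simp [c]
    | succ l ih => rw [c_succ, pow_succ]; simp only [refine]; split_ifs <;> omega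
  · rw [c_succ]; simp only [refine]; split_ifs <;> omega
  · rw [funext (c_succ l)]
    exact (sq_le_sq.2 (hR (c l) S T)).trans (sq_boxSum_sub_blockMean_le A (c l) _ _)

theorem IsRefiningChain.div_pow {A : V × V → ℝ} {c : ℕ → V → ℕ} (h : IsRefiningChain A c) (l d : ℕ)
    (v : V) : c (l + d) v / 4 ^ d = c l v := by
  induction d with
  | zero => simp
  | succ d ih => rw [pow_succ', ← Nat.div_div_eq_div_mul, ← add_assoc, h.succ_div, ih]

section Relabelling

variable {V' : Type*} [Fintype V'] (e : V' ≃ V) (A : V × V → ℝ)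

theorem blockMean_comp_equiv (c : V → ℕ) :
    blockMean (A ∘ Prod.map e e) (c ∘ e) = blockMean A c ∘ Prod.map e e := by
  ext p
  rw [blockMean, condMean, ← Prod.map_comp_map]
  exact fiberMean_comp_equiv (e.prodCongr e) A (Prod.map c c) _

theorem sum_comp_blockMean_comp_equiv (φ : ℝ → ℝ) (c : V → ℕ) :
    ∑ p, φ (blockMean (A ∘ Prod.map e e) (c ∘ e) p) = ∑ p, φ (blockMean A c p) := by
  rw [blockMean_comp_equiv]
  exact Equiv.sum_comp (e.prodCongr e) fun p => φ (blockMean A c p)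

variable {A}

theorem IsRefiningChain.comp_equiv {c : ℕ → V → ℕ} (h : IsRefiningChain A c) :
    IsRefiningChain (A ∘ Prod.map e e) (fun l => c l ∘ e) where
  lt l v := h.lt l (e v)
  succ_div l v := h.succ_div l (e v)
  sq_boxSum_le l S T := by
    have hdiff : A ∘ Prod.map e e - blockMean (A ∘ Prod.map e e) (c l ∘ e)
        = (A - blockMean A (c l)) ∘ Prod.map e e := by rw [blockMean_comp_equiv]; rfl
    simp only [blockEnergy, hdiff, boxSum_comp_equiv, sum_comp_blockMean_comp_equiv e A (· ^ 2),
      Fintype.card_congr e]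
    exact h.sq_boxSum_le l _ _

end Relabelling

theorem exists_sum_mul_le_sum (a : V → ℝ) {s : V → ℝ} (hs : ∀ i, s i ∈ Icc (0 : ℝ) 1) :
    ∃ S : Finset V, ∑ i, a i * s i ≤ ∑ i ∈ S, a i := by
  refine ⟨Finset.univ.filter (0 < a ·), ?_⟩
  rw [Finset.sum_filter]
  refine Finset.sum_le_sum fun i _ => ?_
  split_ifs with h
  · exact mul_le_of_le_one_right h.le (hs i).2
  · exact mul_nonpos_of_nonpos_of_nonneg (not_lt.1 h) (hs i).1

theorem exists_sum_mul_mul_le_boxSum (B : V × V → ℝ) {s t : V → ℝ}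
    (hs : ∀ i, s i ∈ Icc (0 : ℝ) 1) (ht : ∀ i, t i ∈ Icc (0 : ℝ) 1) :
    ∃ S T : Finset V, ∑ p, B p * (s p.1 * t p.2) ≤ boxSum B S T := by
  obtain ⟨S, hS⟩ := exists_sum_mul_le_sum (fun i => ∑ j, B (i, j) * t j) hs
  obtain ⟨T, hT⟩ := exists_sum_mul_le_sum (fun j => ∑ i ∈ S, B (i, j)) ht
  refine ⟨S, T, ?_⟩
  calc ∑ p, B p * (s p.1 * t p.2) = ∑ i, (∑ j, B (i, j) * t j) * s i := by
        simp only [Fintype.sum_prod_type, Finset.sum_mul, mul_assoc, mul_comm (t _)]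
    _ ≤ ∑ i ∈ S, ∑ j, B (i, j) * t j := hS
    _ = ∑ j, (∑ i ∈ S, B (i, j)) * t j := by simp only [Finset.sum_mul]; exact Finset.sum_comm
    _ ≤ ∑ j ∈ T, ∑ i ∈ S, B (i, j) := hT
    _ = boxSum B S T := by rw [boxSum, Finset.sum_product_right]

theorem abs_sum_mul_mul_le_of_abs_boxSum_le {B : V × V → ℝ} {K : ℝ}
    (hB : ∀ S T, |boxSum B S T| ≤ K) {s t : V → ℝ}
    (hs : ∀ i, s i ∈ Icc (0 : ℝ) 1) (ht : ∀ i, t i ∈ Icc (0 : ℝ) 1) :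
    |∑ p, B p * (s p.1 * t p.2)| ≤ K := by
  obtain ⟨S, T, upper⟩ := exists_sum_mul_mul_le_boxSum B hs ht
  obtain ⟨S', T', lower⟩ := exists_sum_mul_mul_le_boxSum (-B) hs ht
  have boxSum_neg : boxSum (-B) S' T' = -boxSum B S' T' := by simp [boxSum]
  simp only [Pi.neg_apply, neg_mul, Finset.sum_neg_distrib, boxSum_neg] at lower
  exact abs_le.2 ⟨by linarith [(abs_le.1 (hB S' T')).1, (abs_le.1 (hB S' T')).2],
    upper.trans (abs_le.1 (hB S T)).2⟩

end RefiningChain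

/-! ### Inhomogeneous random graphs -/

open Classical in
/-- The probability that the pair `p` has the same adjacency status in a random graph with edge
probabilities `q` as it has in `G`. -/
def pairWeight {V : Type*} (q : V × V → ℝ) (G : SimpleGraph V) (p : V × V) : ℝ :=
  if G.Adj p.1 p.2 then q p else 1 - q p

theorem pairWeight_mem_Icc {V : Type*} {q : V × V → ℝ} {p : V × V} (hq : q p ∈ Icc (0 : ℝ) 1)
    (G : SimpleGraph V) : pairWeight q G p ∈ Icc (0 : ℝ) 1 := by
  unfold pairWeight
  split_ifs
  exacts [hq, Icc.mem_iff_one_sub_mem.1 hq]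

theorem pairWeight_swap {V : Type*} {q : V × V → ℝ} (hq : ∀ p, q p.swap = q p) (G : SimpleGraph V)
    (p : V × V) : pairWeight q G p.swap = pairWeight q G p := by
  classical
  simp only [pairWeight, hq]
  exact if_congr (G.adj_comm _ _) rfl rfl

section GraphWeight

variable {V : Type*} [Fintype V] [LinearOrder V]

/-- The pairs `(i, j)` with `i < j`, one for each potential edge. -/
def ltPairs (V : Type*) [Fintype V] [LinearOrder V] : Finset (V × V) :=
  {p | p.1 < p.2}

/-- The probability of `G` in the random graph model that includes each edge `i < j` independently
with probability `q (i, j)`. -/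
def graphWeight (q : V × V → ℝ) (G : SimpleGraph V) : ℝ :=
  ∏ p ∈ ltPairs V, pairWeight q G p

open Classical in
/-- The edges of `G` as ordered pairs; this encoding of graphs as subsets of `ltPairs V` is
bijective. -/
def edgePairs (G : SimpleGraph V) : Finset (V × V) :=
  (ltPairs V).filter fun p => G.Adj p.1 p.2

theorem mem_ltPairs {p : V × V} : p ∈ ltPairs V ↔ p.1 < p.2 := by
  simp [ltPairs]

theorem mem_edgePairs {G : SimpleGraph V} {p : V × V} :
    p ∈ edgePairs G ↔ p.1 < p.2 ∧ G.Adj p.1 p.2 := by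
  simp [edgePairs, mem_ltPairs]

theorem edgePairs_injective : Function.Injective (edgePairs : SimpleGraph V → Finset (V × V)) := by
  intro G H hGH
  have adj_iff {i j : V} (hij : i < j) : G.Adj i j ↔ H.Adj i j := by
    simpa [mem_edgePairs, hij] using Finset.ext_iff.1 hGH (i, j)
  ext i j
  rcases lt_trichotomy i j with hij | rfl | hij
  · exact adj_iff hij
  · simp
  · rw [G.adj_comm, H.adj_comm, adj_iff hij]

theorem exists_edgePairs_eq {E : Finset (V × V)} (hE : E ⊆ ltPairs V) :
    ∃ G : SimpleGraph V, edgePairs G = E := by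
  refine ⟨SimpleGraph.fromRel fun i j => (i, j) ∈ E, ?_⟩
  ext ⟨i, j⟩
  rw [mem_edgePairs, SimpleGraph.fromRel_adj]
  have lt_of_mem {i j : V} (h : (i, j) ∈ E) : i < j := mem_ltPairs.1 (hE h)
  exact ⟨fun ⟨hij, _, h⟩ => h.resolve_right fun h' => hij.not_gt (lt_of_mem h'),
    fun h => ⟨lt_of_mem h, (lt_of_mem h).ne, .inl h⟩⟩

theorem graphWeight_eq_prod_mul_prod (q : V × V → ℝ) (G : SimpleGraph V) :
    graphWeight q G = (∏ p ∈ edgePairs G, q p) * ∏ p ∈ ltPairs V \ edgePairs G, (1 - q p) := by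
  classical
  unfold graphWeight pairWeight
  rw [Finset.prod_ite, edgePairs, ← Finset.filter_not]

theorem sum_graphWeight (q : V × V → ℝ) : ∑ G, graphWeight q G = 1 := by
  classical
  calc ∑ G, graphWeight q G
      = ∑ E ∈ (ltPairs V).powerset, (∏ p ∈ E, q p) * ∏ p ∈ ltPairs V \ E, (1 - q p) :=
        Finset.sum_bij (fun G _ => edgePairs G)
          (fun G _ => Finset.mem_powerset.2 (Finset.filter_subset _ _))
          (fun _ _ _ _ h => edgePairs_injective h)
          (fun E hE => by simpa using exists_edgePairs_eq (Finset.mem_powerset.1 hE))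
          (fun G _ => graphWeight_eq_prod_mul_prod q G)
    _ = ∏ p ∈ ltPairs V, (q p + (1 - q p)) := (Finset.prod_add _ _ _).symm
    _ = 1 := by simp

theorem graphWeight_mem_Icc {q : V × V → ℝ} (hq : ∀ p, q p ∈ Icc (0 : ℝ) 1) (G : SimpleGraph V) :
    graphWeight q G ∈ Icc (0 : ℝ) 1 :=
  ⟨Finset.prod_nonneg fun p _ => (pairWeight_mem_Icc (hq p) G).1,
    Finset.prod_le_one (fun p _ => (pairWeight_mem_Icc (hq p) G).1)
      fun p _ => (pairWeight_mem_Icc (hq p) G).2⟩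

theorem sum_le_two_mul_sum_ltPairs {g : V × V → ℝ} (symm : ∀ p, g p.swap = g p)
    (diag : ∀ i, g (i, i) ≤ 0) : ∑ p, g p ≤ 2 * ∑ p ∈ ltPairs V, g p := by
  have lower_triangle : ∑ p : V × V with p.2 < p.1, g p = ∑ p ∈ ltPairs V, g p :=
    Finset.sum_equiv (Equiv.prodComm V V) (by simp [mem_ltPairs]) fun p _ => (symm p).symm
  calc ∑ p, g p ≤ ∑ p : V × V, ((if p.1 < p.2 then g p else 0) + if p.2 < p.1 then g p else 0) := by
        refine Finset.sum_le_sum fun ⟨i, j⟩ _ => ?_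
        rcases lt_trichotomy i j with h | rfl | h
        · simp [h, h.not_gt]
        · simpa using diag i
        · simp [h, h.not_gt]
    _ = 2 * ∑ p ∈ ltPairs V, g p := by
        rw [Finset.sum_add_distrib, ← Finset.sum_filter, ← Finset.sum_filter, lower_triangle,
          two_mul]
        rfl

end GraphWeight

/-! ### Graphs with prescribed block densities -/

section BlockEntropy

variable {V : Type*}

open Classical in
/-- The adjacency matrix of `G`, uncurried. -/
def adjIndicator (G : SimpleGraph V) (p : V × V) : ℝ :=
  if G.Adj p.1 p.2 then 1 else 0

theorem adjIndicator_mem_Icc (G : SimpleGraph V) (p : V × V) :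
    adjIndicator G p ∈ Icc (0 : ℝ) 1 := by
  unfold adjIndicator
  split_ifs <;> simp

theorem adjIndicator_swap (G : SimpleGraph V) (p : V × V) :
    adjIndicator G p.swap = adjIndicator G p := by
  classical exact if_congr (G.adj_comm _ _) rfl rfl

variable [Fintype V]

/-- The entropy of the block densities of `A`, summed over all ordered pairs. -/
def blockEntropy (A : V × V → ℝ) (c : V → ℕ) : ℝ :=
  ∑ p, binEnt (blockMean A c p)

theorem blockMean_adjIndicator_mem_Icc (G : SimpleGraph V) (c : V → ℕ) (p : V × V) :
    blockMean (adjIndicator G) c p ∈ Icc (0 : ℝ) 1 :=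
  fiberMean_mem_Icc (adjIndicator_mem_Icc G) _ _

theorem fiberMean_adjIndicator_swap (G : SimpleGraph V) (c : V → ℕ) (k : ℕ × ℕ) :
    fiberMean (adjIndicator G) (Prod.map c c) k.swap
      = fiberMean (adjIndicator G) (Prod.map c c) k := by
  refine Finset.expect_equiv (Equiv.prodComm V V) (fun p => ?_) fun p _ => ?_
  · simp [Prod.ext_iff, and_comm]
  · classical exact if_congr (G.adj_comm _ _) rfl rfl

theorem blockMean_adjIndicator_swap (G : SimpleGraph V) (c : V → ℕ) (p : V × V) :
    blockMean (adjIndicator G) c p.swap = blockMean (adjIndicator G) c p :=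
  fiberMean_adjIndicator_swap G c (Prod.map c c p)

theorem pairWeight_blockMean_pos (G : SimpleGraph V) (c : V → ℕ) (p : V × V) :
    0 < pairWeight (blockMean (adjIndicator G) c) G p := by
  unfold pairWeight
  split_ifs with h
  · exact condMean_pos (fun q => (adjIndicator_mem_Icc G q).1) _ (by simp [adjIndicator, h])
  · rw [blockMean, ← condMean_one_sub]
    exact condMean_pos (fun q => sub_nonneg.2 (adjIndicator_mem_Icc G q).2) _
      (by simp [adjIndicator, h])

/-- The log-likelihood is affine in the adjacency matrix with coefficients constant on blocks, so
the adjacency matrix may be replaced by its block means. -/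
theorem sum_logb_pairWeight_blockMean (G : SimpleGraph V) (c : V → ℕ) :
    ∑ p, Real.logb 2 (pairWeight (blockMean (adjIndicator G) c) G p)
      = -blockEntropy (adjIndicator G) c := by
  let A := adjIndicator G
  let logOdds (k : ℕ × ℕ) : ℝ := Real.logb 2 (fiberMean A (Prod.map c c) k)
    - Real.logb 2 (1 - fiberMean A (Prod.map c c) k)
  have affine p : Real.logb 2 (pairWeight (blockMean A c) G p)
      = A p * logOdds (Prod.map c c p) + Real.logb 2 (1 - blockMean A c p) := by
    simp only [logOdds, A, adjIndicator, pairWeight, blockMean, condMean]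
    split_ifs <;> ring
  have neg_binEnt p : -binEnt (blockMean A c p)
      = blockMean A c p * logOdds (Prod.map c c p) + Real.logb 2 (1 - blockMean A c p) := by
    simp only [logOdds, binEnt, blockMean, condMean]
    ring
  calc ∑ p, Real.logb 2 (pairWeight (blockMean A c) G p)
      = ∑ p, A p * logOdds (Prod.map c c p) + ∑ p, Real.logb 2 (1 - blockMean A c p) := by
        simp only [affine, Finset.sum_add_distrib]
    _ = ∑ p, blockMean A c p * logOdds (Prod.map c c p)
          + ∑ p, Real.logb 2 (1 - blockMean A c p) := by
        rw [← sum_condMean_mul_comp, blockMean]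
    _ = -blockEntropy A c := by
        rw [blockEntropy, ← Finset.sum_neg_distrib, ← Finset.sum_add_distrib]
        simp only [neg_binEnt]

theorem two_rpow_neg_blockEntropy_le_graphWeight [LinearOrder V] (G : SimpleGraph V) (c : V → ℕ) :
    (2 : ℝ) ^ (-(blockEntropy (adjIndicator G) c / 2))
      ≤ graphWeight (blockMean (adjIndicator G) c) G := by
  set q := blockMean (adjIndicator G) c
  have symm p : Real.logb 2 (pairWeight q G p.swap) = Real.logb 2 (pairWeight q G p) := by
    rw [pairWeight_swap (blockMean_adjIndicator_swap G c)]
  have nonpos p : Real.logb 2 (pairWeight q G p) ≤ 0 :=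
    Real.logb_nonpos one_lt_two (pairWeight_blockMean_pos G c p).le
      (pairWeight_mem_Icc (blockMean_adjIndicator_mem_Icc G c p) G).2
  have half_sum := sum_le_two_mul_sum_ltPairs (g := fun p => Real.logb 2 (pairWeight q G p)) symm
    fun i => nonpos (i, i)
  rw [sum_logb_pairWeight_blockMean] at half_sum
  calc (2 : ℝ) ^ (-(blockEntropy (adjIndicator G) c / 2))
      ≤ 2 ^ ∑ p ∈ ltPairs V, Real.logb 2 (pairWeight q G p) :=
        Real.rpow_le_rpow_of_exponent_le one_le_two (by linarith)
    _ = graphWeight q G := by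
        rw [Real.rpow_sum_of_pos two_pos]
        exact Finset.prod_congr rfl fun p _ =>
          Real.rpow_logb two_pos (by norm_num) (pairWeight_blockMean_pos G c p)

theorem card_le_two_rpow_blockEntropy {𝒢 : Finset (SimpleGraph V)} {G₀ : SimpleGraph V} (c : V → ℕ)
    (h : ∀ G ∈ 𝒢, blockMean (adjIndicator G) c = blockMean (adjIndicator G₀) c) :
    (𝒢.card : ℝ) ≤ 2 ^ (blockEntropy (adjIndicator G₀) c / 2) := by
  classical
  obtain ⟨_⟩ : Nonempty (LinearOrder V) := ⟨linearOrderOfSTO WellOrderingRel⟩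
  set q := blockMean (adjIndicator G₀) c
  have weight_ge G (hG : G ∈ 𝒢) : (2 : ℝ) ^ (-(blockEntropy (adjIndicator G₀) c / 2))
      ≤ graphWeight q G := by
    simpa only [blockEntropy, h G hG] using two_rpow_neg_blockEntropy_le_graphWeight G c
  have total : (𝒢.card : ℝ) * 2 ^ (-(blockEntropy (adjIndicator G₀) c / 2)) ≤ 1 :=
    calc (𝒢.card : ℝ) * 2 ^ (-(blockEntropy (adjIndicator G₀) c / 2))
        ≤ ∑ G ∈ 𝒢, graphWeight q G := by
          simpa only [nsmul_eq_mul] using Finset.card_nsmul_le_sum _ _ _ weight_ge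
      _ ≤ ∑ G, graphWeight q G := Finset.sum_le_univ_sum_of_nonneg fun G =>
          (graphWeight_mem_Icc (blockMean_adjIndicator_mem_Icc G₀ c) G).1
      _ = 1 := sum_graphWeight q
  rwa [Real.rpow_neg zero_le_two, ← div_eq_mul_inv, div_le_one (by positivity)] at total

end BlockEntropy

/-! ### Popular refining chains -/

section ChainProfile

variable {V : Type*} [Fintype V]

open Classical in
/-- The number of ordered pairs of adjacent vertices of `G` coloured `k`. -/
def edgeCount (G : SimpleGraph V) (c : V → ℕ) (k : ℕ × ℕ) : ℕ :=
  #{p : V × V | Prod.map c c p = k ∧ G.Adj p.1 p.2}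

theorem edgeCount_lt (G : SimpleGraph V) (c : V → ℕ) (k : ℕ × ℕ) :
    edgeCount G c k < Fintype.card (V × V) + 1 :=
  Nat.lt_succ_of_le (Finset.card_le_univ _)

theorem fiberMean_adjIndicator (G : SimpleGraph V) (c : V → ℕ) (k : ℕ × ℕ) :
    fiberMean (adjIndicator G) (Prod.map c c) k
      = edgeCount G c k / (#{p : V × V | Prod.map c c p = k} : ℝ) := by
  simp only [fiberMean, adjIndicator, Finset.expect_eq_sum_div_card, edgeCount, Finset.sum_boole,
    Finset.filter_filter]

/-- The data of a refining chain `c` of a graph that determine its colourings and block densities up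
to level `L`: the colouring `c L`, and for each level the number of edges in each block. -/
abbrev ChainProfile (V : Type*) [Fintype V] (L : ℕ) : Type _ :=
  (V → Fin (4 ^ L)) ×
    (Fin (L + 1) → Fin (4 ^ L) × Fin (4 ^ L) → Fin (Fintype.card (V × V) + 1))

/-- The profile up to level `L` of a refining chain of `G`. -/
def chainProfile {G : SimpleGraph V} {c : ℕ → V → ℕ} (h : IsRefiningChain (adjIndicator G) c)
    (L : ℕ) : ChainProfile V L :=
  (fun v => ⟨c L v, h.lt L v⟩,
    fun l k => ⟨edgeCount G (c l) (k.1, k.2), edgeCount_lt _ _ _⟩)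

theorem eq_of_chainProfile_eq {G H : SimpleGraph V} {c d : ℕ → V → ℕ}
    {hc : IsRefiningChain (adjIndicator G) c} {hd : IsRefiningChain (adjIndicator H) d} {L : ℕ}
    (h : chainProfile hc L = chainProfile hd L) {l : ℕ} (hl : l ≤ L) : c l = d l := by
  obtain ⟨m, rfl⟩ := Nat.exists_eq_add_of_le hl
  ext v
  have top : c (l + m) v = d (l + m) v := Fin.ext_iff.1 (congrFun (congrArg Prod.fst h) v)
  rw [← hc.div_pow l m, ← hd.div_pow l m, top]

theorem blockMean_eq_of_chainProfile_eq {G H : SimpleGraph V} {c d : ℕ → V → ℕ}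
    {hc : IsRefiningChain (adjIndicator G) c} {hd : IsRefiningChain (adjIndicator H) d} {L : ℕ}
    (h : chainProfile hc L = chainProfile hd L) {l : ℕ} (hl : l ≤ L) :
    blockMean (adjIndicator G) (d l) = blockMean (adjIndicator H) (d l) := by
  ext p
  have lt v : d l v < 4 ^ L := (hd.lt l v).trans_le (Nat.pow_le_pow_right (by norm_num) hl)
  have edges := Fin.ext_iff.1 (congrFun (congrFun (congrArg Prod.snd h)
    ⟨l, Nat.lt_succ_of_le hl⟩) (⟨d l p.1, lt p.1⟩, ⟨d l p.2, lt p.2⟩))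
  simp only [chainProfile, eq_of_chainProfile_eq h hl] at edges
  simp only [blockMean, condMean, fiberMean_adjIndicator, Prod.map, edges]

theorem exists_card_le_card_chainProfile_mul {Q : Set (SimpleGraph V)} (hQ : Q.Nonempty) (L : ℕ) :
    ∃ G ∈ Q, ∃ c, IsRefiningChain (adjIndicator G) c ∧ ∀ l ≤ L,
      (Nat.card Q : ℝ)
        ≤ Nat.card (ChainProfile V L) * 2 ^ (blockEntropy (adjIndicator G) (c l) / 2) := by
  classical
  choose c hc using fun G : SimpleGraph V => exists_isRefiningChain (adjIndicator G)
  let profile (G : SimpleGraph V) : ChainProfile V L := chainProfile (hc G) L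
  obtain ⟨G₁, hG₁⟩ := hQ
  have card_Q_pos : (0 : ℝ) < #Q.toFinset :=
    Nat.cast_pos.2 (Finset.card_pos.2 ⟨G₁, Set.mem_toFinset.2 hG₁⟩)
  have card_profile_pos : (0 : ℝ) < Nat.card (ChainProfile V L) :=
    have : Nonempty (ChainProfile V L) := ⟨profile G₁⟩
    Nat.cast_pos.2 Nat.card_pos
  obtain ⟨P, -, popular⟩ := Finset.exists_le_card_fiber_of_nsmul_le_card_of_maps_to
    (s := Q.toFinset) (f := profile) (b := (#Q.toFinset : ℝ) / Nat.card (ChainProfile V L))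
    (fun _ _ => Finset.mem_univ _) ⟨profile G₁, Finset.mem_univ _⟩
    (by rw [nsmul_eq_mul, Finset.card_univ, ← Nat.card_eq_fintype_card,
      mul_div_cancel₀ _ card_profile_pos.ne'])
  obtain ⟨G, hG⟩ : {G ∈ Q.toFinset | profile G = P}.Nonempty :=
    Finset.card_pos.1 (Nat.cast_pos.1 ((div_pos card_Q_pos card_profile_pos).trans_le popular))
  obtain ⟨hGQ, rfl⟩ := Finset.mem_filter.1 hG
  rw [div_le_iff₀' card_profile_pos] at popular
  refine ⟨G, Set.mem_toFinset.1 hGQ, c G, hc G, fun l hl => ?_⟩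
  rw [Nat.card_eq_card_toFinset]
  refine popular.trans (mul_le_mul_of_nonneg_left ?_ card_profile_pos.le)
  exact card_le_two_rpow_blockEntropy (c G l) fun H hH =>
    blockMean_eq_of_chainProfile_eq (Finset.mem_filter.1 hH).2 hl

end ChainProfile

theorem exists_card_chainProfile_le (L : ℕ) :
    ∃ K : ℕ, ∀ n, Nat.card (ChainProfile (Fin n) L) ≤ 2 ^ (K * n) := by
  let M := (L + 1) * (4 ^ L * 4 ^ L)
  refine ⟨2 * L + 2 * M, fun n => ?_⟩
  have sq_lt : n * n + 1 ≤ 2 ^ (2 * n) := by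
    rw [two_mul, pow_add]
    nlinarith [Nat.lt_two_pow_self (n := n)]
  calc Nat.card (ChainProfile (Fin n) L) = (2 ^ 2) ^ (L * n) * (n * n + 1) ^ M := by
        simp only [ChainProfile, Nat.card_eq_fintype_card, Fintype.card_prod, Fintype.card_fun,
          Fintype.card_fin, M, Nat.reducePow, ← pow_mul, mul_comm (L + 1)]
    _ ≤ (2 ^ 2) ^ (L * n) * (2 ^ (2 * n)) ^ M := by gcongr
    _ = 2 ^ ((2 * L + 2 * M) * n) := by
        rw [← pow_mul, ← pow_mul, ← pow_add]
        ring_nf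

theorem exists_monotone_isRefiningChain (L : ℕ) :
    ∃ K : ℕ, ∀ {Q : GraphClass}, IsGraphClass Q → ∀ {n}, (Q n).Nonempty →
      ∃ G ∈ Q n, ∃ c, IsRefiningChain (adjIndicator G) c ∧ ∀ l ≤ L, Monotone (c l) ∧
        (Nat.card (Q n) : ℝ) ≤ 2 ^ (K * n + blockEntropy (adjIndicator G) (c l) / 2) := by
  obtain ⟨K, hK⟩ := exists_card_chainProfile_le L
  refine ⟨K, fun {Q} hQ {n} hne => ?_⟩
  obtain ⟨G, hG, c, hc, hcard⟩ := exists_card_le_card_chainProfile_mul hne L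
  let π : Equiv.Perm (Fin n) := Tuple.sort (c L)
  have hπ : adjIndicator (G.comap π) = adjIndicator G ∘ Prod.map π π := rfl
  refine ⟨G.comap π, hQ n π G hG, fun l => c l ∘ π, hπ ▸ hc.comp_equiv π, fun l hl => ⟨?_, ?_⟩⟩
  · obtain ⟨d, rfl⟩ := Nat.exists_eq_add_of_le hl
    intro u v huv
    simp only [Function.comp_apply, ← hc.div_pow l d]
    exact Nat.div_le_div_right (Tuple.monotone_sort (c (l + d)) huv)
  · rw [hπ, blockEntropy, sum_comp_blockMean_comp_equiv, Real.rpow_add two_pos]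
    refine (hcard l hl).trans (mul_le_mul_of_nonneg_right ?_ (by positivity))
    exact_mod_cast hK n

/-! ### The unit square and step kernels -/

/-- Lebesgue measure on `[0,1]`, the probability space on which graphons live. -/
def unitMeasure : Measure ℝ := volume.restrict (Icc 0 1)

/-- Lebesgue measure on `[0,1]²`, as a measure on `ℝ × ℝ`; the reference measure for all integrals
of kernels. -/
abbrev squareMeasure : Measure (ℝ × ℝ) := unitMeasure.prod unitMeasure

instance : IsProbabilityMeasure unitMeasure := ⟨by simp [unitMeasure]⟩

theorem unitMeasure_eq_restrict_Ioc : unitMeasure = volume.restrict (Ioc 0 1) :=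
  (Measure.restrict_congr_set Ioc_ae_eq_Icc).symm

theorem ae_unitMeasure_mem_Ioc : ∀ᵐ x ∂unitMeasure, x ∈ Ioc (0 : ℝ) 1 := by
  rw [unitMeasure_eq_restrict_Ioc]
  exact ae_restrict_mem measurableSet_Ioc

theorem ae_squareMeasure_of_ae {s : ℝ → Prop} (hs : ∀ᵐ x ∂unitMeasure, s x) :
    ∀ᵐ p ∂squareMeasure, s p.1 ∧ s p.2 :=
  (Measure.quasiMeasurePreserving_fst.ae hs).and (Measure.quasiMeasurePreserving_snd.ae hs)

theorem restrict_prod_le_squareMeasure {S T : Set ℝ} (hS : S ⊆ Icc 0 1) (hT : T ⊆ Icc 0 1) :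
    (volume : Measure (ℝ × ℝ)).restrict (S ×ˢ T) ≤ squareMeasure := by
  rw [squareMeasure, unitMeasure, Measure.prod_restrict]
  exact Measure.restrict_mono_set _ (prod_mono hS hT)

section Grid

variable {n : ℕ} [NeZero n]

/-- The index `i` (counted from `0`) of the cell `(i/n, (i+1)/n]` of the uniform grid on `(0,1]`
that contains `x`; a junk value outside `(0,1]`. -/
def gridIndex (n : ℕ) [NeZero n] (x : ℝ) : Fin n := Fin.ofNat n (⌈(n : ℝ) * x⌉ - 1).toNat

theorem measurable_gridIndex : Measurable (gridIndex n) := by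
  have h : Measurable fun k : ℤ => Fin.ofNat n (k - 1).toNat := Measurable.of_discrete
  exact h.comp (Int.measurable_ceil.comp (measurable_const_mul (n : ℝ)))

theorem measurable_gridIndex_prod :
    Measurable fun p : ℝ × ℝ => (gridIndex n p.1, gridIndex n p.2) :=
  (measurable_gridIndex.comp measurable_fst).prodMk (measurable_gridIndex.comp measurable_snd)

theorem ceil_eq_gridIndex_add_one {x : ℝ} (hx : x ∈ Ioc (0 : ℝ) 1) :
    ⌈(n : ℝ) * x⌉ = ((gridIndex n x : ℕ) : ℤ) + 1 := by
  have hn : (0 : ℝ) < n := by exact_mod_cast NeZero.pos n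
  have ceil_pos : 0 < ⌈(n : ℝ) * x⌉ := Int.ceil_pos.2 (mul_pos hn hx.1)
  have ceil_le : ⌈(n : ℝ) * x⌉ ≤ n := Int.ceil_le.2 (by push_cast; nlinarith [hx.2])
  simp only [gridIndex, Fin.val_ofNat]
  rw [Nat.mod_eq_of_lt (by omega)]
  omega

theorem gridIndex_eq_iff_ceil {x : ℝ} (hx : x ∈ Ioc (0 : ℝ) 1) (i : Fin n) :
    gridIndex n x = i ↔ ⌈(n : ℝ) * x⌉ = ((i : ℕ) : ℤ) + 1 := by
  rw [ceil_eq_gridIndex_add_one hx, Fin.ext_iff]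
  omega

theorem gridIndex_preimage_inter_Ioc (i : Fin n) :
    gridIndex n ⁻¹' {i} ∩ Ioc 0 1 = Ioc ((i : ℕ) / (n : ℝ)) (((i : ℕ) + 1) / (n : ℝ)) := by
  have hn : (0 : ℝ) < n := by exact_mod_cast NeZero.pos n
  have hi : ((i : ℕ) : ℝ) + 1 ≤ n := by exact_mod_cast i.2
  have mem_cell_iff (x : ℝ) : ⌈(n : ℝ) * x⌉ = ((i : ℕ) : ℤ) + 1 ↔
      x ∈ Ioc ((i : ℕ) / (n : ℝ)) (((i : ℕ) + 1) / (n : ℝ)) := by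
    rw [Int.ceil_eq_iff, mem_Ioc, div_lt_iff₀ hn, le_div_iff₀ hn]
    push_cast
    rw [mul_comm x, add_sub_cancel_right]
  ext x
  refine ⟨fun h => (mem_cell_iff x).1 ((gridIndex_eq_iff_ceil h.2 i).1 h.1), fun h => ?_⟩
  have hx : x ∈ Ioc (0 : ℝ) 1 :=
    ⟨lt_of_le_of_lt (by positivity) h.1, h.2.trans ((div_le_one hn).2 hi)⟩
  exact ⟨(gridIndex_eq_iff_ceil hx i).2 ((mem_cell_iff x).2 h), hx⟩

theorem unitMeasure_real_gridIndex_preimage (i : Fin n) :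
    unitMeasure.real (gridIndex n ⁻¹' {i}) = 1 / n := by
  rw [unitMeasure_eq_restrict_Ioc,
    measureReal_restrict_apply (measurable_gridIndex (measurableSet_singleton i)),
    gridIndex_preimage_inter_Ioc, Real.volume_real_Ioc_of_le (by gcongr; linarith)]
  ring

/-- The kernel on `[0,1]²` equal to the entry `B (i, j)` on the cell of the uniform grid with index
`(i, j)`. -/
def stepKernel (B : Fin n × Fin n → ℝ) (x y : ℝ) : ℝ := B (gridIndex n x, gridIndex n y)

theorem graphonOfGraph_eq_stepKernel (G : SimpleGraph (Fin n)) {x y : ℝ} (hx : x ∈ Ioc (0 : ℝ) 1)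
    (hy : y ∈ Ioc (0 : ℝ) 1) : graphonOfGraph G x y = stepKernel (adjIndicator G) x y := by
  have adj_iff : (∃ i j : Fin n, G.Adj i j ∧ ⌈(n : ℝ) * x⌉ = ((i : ℕ) : ℤ) + 1 ∧
      ⌈(n : ℝ) * y⌉ = ((j : ℕ) : ℤ) + 1) ↔ G.Adj (gridIndex n x) (gridIndex n y) := by
    simp only [← gridIndex_eq_iff_ceil hx, ← gridIndex_eq_iff_ceil hy]
    aesop
  classical exact if_congr adj_iff rfl rfl

theorem isGraphon_stepKernel {B : Fin n × Fin n → ℝ} (hsymm : ∀ p, B p.swap = B p)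
    (hB : ∀ p, B p ∈ Icc (0 : ℝ) 1) : IsGraphon (stepKernel B) :=
  ⟨fun x y => hsymm (gridIndex n y, gridIndex n x),
    (Measurable.of_discrete (f := B)).comp measurable_gridIndex_prod, fun _ _ => hB _⟩

theorem integral_stepKernel_prod (B : Fin n × Fin n → ℝ) (μ ν : Measure ℝ) [IsFiniteMeasure μ]
    [IsFiniteMeasure ν] :
    ∫ p, stepKernel B p.1 p.2 ∂μ.prod ν =
      ∑ p, B p * (μ.real (gridIndex n ⁻¹' {p.1}) * ν.real (gridIndex n ⁻¹' {p.2})) := by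
  simp only [stepKernel]
  rw [← integral_map (f := B) measurable_gridIndex_prod.aemeasurable
      Measurable.of_discrete.aestronglyMeasurable, integral_fintype Integrable.of_finite]
  refine Finset.sum_congr rfl fun p _ => ?_
  have preimage_eq : (fun q : ℝ × ℝ => (gridIndex n q.1, gridIndex n q.2)) ⁻¹' {p} =
      (gridIndex n ⁻¹' {p.1}) ×ˢ (gridIndex n ⁻¹' {p.2}) := by
    ext q
    simp [Prod.ext_iff]
  rw [map_measureReal_apply measurable_gridIndex_prod (measurableSet_singleton p), preimage_eq,
    measureReal_prod_prod, smul_eq_mul, mul_comm]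

theorem integral_stepKernel (B : Fin n × Fin n → ℝ) :
    ∫ p, stepKernel B p.1 p.2 ∂squareMeasure = (∑ p, B p) / (n : ℝ) ^ 2 := by
  simp only [integral_stepKernel_prod, unitMeasure_real_gridIndex_preimage, Finset.sum_div]
  exact Finset.sum_congr rfl fun p _ => by ring

end Grid

/-! ### The cut norm and the cut distance -/

theorem cutNorm_nonneg (U : ℝ → ℝ → ℝ) : 0 ≤ cutNorm U := by
  apply Real.sSup_nonneg
  rintro r ⟨S, T, -, -, -, -, rfl⟩
  exact abs_nonneg _

theorem cutNorm_le {U : ℝ → ℝ → ℝ} {K : ℝ}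
    (h : ∀ S T : Set ℝ, MeasurableSet S → MeasurableSet T → S ⊆ Icc 0 1 → T ⊆ Icc 0 1 →
      |∫ p in S ×ˢ T, U p.1 p.2| ≤ K) :
    cutNorm U ≤ K := by
  refine csSup_le ⟨_, ∅, ∅, .empty, .empty, empty_subset _, empty_subset _, rfl⟩ ?_
  rintro r ⟨S, T, mS, mT, hS, hT, rfl⟩
  exact h S T mS mT hS hT

theorem abs_setIntegral_le_integral_abs {U : ℝ → ℝ → ℝ}
    (hU : Integrable (fun p : ℝ × ℝ => U p.1 p.2) squareMeasure) {S T : Set ℝ}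
    (hS : S ⊆ Icc 0 1) (hT : T ⊆ Icc 0 1) :
    |∫ p in S ×ˢ T, U p.1 p.2| ≤ ∫ p, |U p.1 p.2| ∂squareMeasure :=
  abs_integral_le_integral_abs.trans <| integral_mono_measure (restrict_prod_le_squareMeasure hS hT)
    (Eventually.of_forall fun _ => abs_nonneg _) hU.abs

theorem abs_setIntegral_le_cutNorm {U : ℝ → ℝ → ℝ}
    (hU : Integrable (fun p : ℝ × ℝ => U p.1 p.2) squareMeasure) {S T : Set ℝ}
    (mS : MeasurableSet S) (mT : MeasurableSet T) (hS : S ⊆ Icc 0 1) (hT : T ⊆ Icc 0 1) :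
    |∫ p in S ×ˢ T, U p.1 p.2| ≤ cutNorm U := by
  refine le_csSup ⟨∫ p, |U p.1 p.2| ∂squareMeasure, ?_⟩ ⟨S, T, mS, mT, hS, hT, rfl⟩
  rintro r ⟨S, T, -, -, hS, hT, rfl⟩
  exact abs_setIntegral_le_integral_abs hU hS hT

theorem cutNorm_congr {U V : ℝ → ℝ → ℝ} (h : ∀ᵐ p ∂squareMeasure, U p.1 p.2 = V p.1 p.2) :
    cutNorm U = cutNorm V := by
  unfold cutNorm
  congr 1 with r
  refine exists₂_congr fun S T => and_congr_right fun _ => and_congr_right fun _ =>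
    and_congr_right fun hS => and_congr_right fun hT => ?_
  rw [integral_congr_ae (ae_mono (restrict_prod_le_squareMeasure hS hT) h)]

theorem dCut_le_dCut_add_integral_abs {U V W : ℝ → ℝ → ℝ}
    (hU : Integrable (fun p : ℝ × ℝ => U p.1 p.2) squareMeasure)
    (hV : Integrable (fun p : ℝ × ℝ => V p.1 p.2) squareMeasure)
    (hW : Integrable (fun p : ℝ × ℝ => W p.1 p.2) squareMeasure) :
    dCut U W ≤ dCut U V + ∫ p, |V p.1 p.2 - W p.1 p.2| ∂squareMeasure := by
  have hUV : Integrable (fun p : ℝ × ℝ => U p.1 p.2 - V p.1 p.2) squareMeasure := hU.sub hV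
  have hVW : Integrable (fun p : ℝ × ℝ => V p.1 p.2 - W p.1 p.2) squareMeasure := hV.sub hW
  refine cutNorm_le fun S T mS mT hS hT => ?_
  have restrict_le := restrict_prod_le_squareMeasure hS hT
  calc |∫ p in S ×ˢ T, (U p.1 p.2 - W p.1 p.2)|
      = |(∫ p in S ×ˢ T, (U p.1 p.2 - V p.1 p.2)) + ∫ p in S ×ˢ T, (V p.1 p.2 - W p.1 p.2)| := by
        rw [← integral_add (hUV.mono_measure restrict_le) (hVW.mono_measure restrict_le)]
        simp only [sub_add_sub_cancel]
    _ ≤ dCut U V + ∫ p, |V p.1 p.2 - W p.1 p.2| ∂squareMeasure :=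
        (abs_add_le _ _).trans <| add_le_add
          (abs_setIntegral_le_cutNorm (U := fun x y => U x y - V x y) hUV mS mT hS hT)
          (abs_setIntegral_le_integral_abs (U := fun x y => V x y - W x y) hVW hS hT)

theorem deltaCut_nonneg (U V : ℝ → ℝ → ℝ) : 0 ≤ deltaCut U V := by
  apply Real.sInf_nonneg
  rintro r ⟨_, _, -, -, rfl⟩
  exact cutNorm_nonneg _

theorem deltaCut_le_dCut (U V : ℝ → ℝ → ℝ) : deltaCut U V ≤ dCut U V := by
  refine csInf_le ⟨0, ?_⟩ ?_
  · rintro r ⟨_, _, -, -, rfl⟩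
    exact cutNorm_nonneg _
  · exact ⟨id, id, ⟨.id _, mapsTo_id _⟩, ⟨.id _, mapsTo_id _⟩, rfl⟩

theorem deltaCut_graphonOfGraph_le {n : ℕ} [NeZero n] (G : SimpleGraph (Fin n))
    (W : ℝ → ℝ → ℝ) :
    deltaCut (graphonOfGraph G) W ≤ dCut (stepKernel (adjIndicator G)) W := by
  refine (deltaCut_le_dCut _ _).trans_eq (cutNorm_congr ?_)
  filter_upwards [ae_squareMeasure_of_ae ae_unitMeasure_mem_Ioc] with p hp
  rw [graphonOfGraph_eq_stepKernel G hp.1 hp.2]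

theorem mul_real_restrict_gridIndex_preimage_mem_Icc {n : ℕ} [NeZero n] {S : Set ℝ}
    (hS : S ⊆ Icc 0 1) (i : Fin n) :
    (n : ℝ) * (volume.restrict S).real (gridIndex n ⁻¹' {i}) ∈ Icc (0 : ℝ) 1 := by
  refine ⟨by positivity, ?_⟩
  calc (n : ℝ) * (volume.restrict S).real (gridIndex n ⁻¹' {i})
      ≤ n * unitMeasure.real (gridIndex n ⁻¹' {i}) := by
        gcongr
        exact ENNReal.toReal_mono (measure_ne_top _ _) (Measure.restrict_mono_set _ hS _)
    _ = 1 := by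
        rw [unitMeasure_real_gridIndex_preimage, mul_one_div_cancel]
        exact_mod_cast NeZero.ne n

theorem cutNorm_stepKernel_le {n : ℕ} [NeZero n] {B : Fin n × Fin n → ℝ} {K : ℝ}
    (hB : ∀ S T, |boxSum B S T| ≤ K) : cutNorm (stepKernel B) ≤ K / (n : ℝ) ^ 2 := by
  have hn : (0 : ℝ) < n := by exact_mod_cast NeZero.pos n
  refine cutNorm_le fun S T _ _ hS hT => ?_
  have finite_restrict {R : Set ℝ} (hR : R ⊆ Icc 0 1) : IsFiniteMeasure (volume.restrict R) :=
    isFiniteMeasure_of_le unitMeasure (Measure.restrict_mono_set _ hR)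
  have := finite_restrict hS
  have := finite_restrict hT
  have scaled := abs_sum_mul_mul_le_of_abs_boxSum_le hB
    (mul_real_restrict_gridIndex_preimage_mem_Icc hS)
    (mul_real_restrict_gridIndex_preimage_mem_Icc hT)
  rw [Measure.volume_eq_prod, ← Measure.prod_restrict, integral_stepKernel_prod,
    le_div_iff₀ (by positivity), ← abs_of_nonneg (sq_nonneg (n : ℝ)), ← abs_mul, Finset.sum_mul]
  refine le_of_eq_of_le (congrArg _ (Finset.sum_congr rfl fun p _ => ?_)) scaled
  ring

/-! ### Pointwise limits of graphons -/

section GraphonLimits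

variable {U V W : ℝ → ℝ → ℝ} {f g : ℕ → ℝ → ℝ → ℝ}

theorem IsGraphon.measurable (hW : IsGraphon W) : Measurable fun p : ℝ × ℝ => W p.1 p.2 := hW.2.1

theorem IsGraphon.mem_Icc (hW : IsGraphon W) (x y : ℝ) : W x y ∈ Icc (0 : ℝ) 1 := hW.2.2 x y

theorem exists_norm_comp_le_of_isGraphon {Φ : ℝ → ℝ → ℝ} (hΦ : Continuous (Function.uncurry Φ)) :
    ∃ K, ∀ U V, IsGraphon U → IsGraphon V → ∀ p : ℝ × ℝ, ‖Φ (U p.1 p.2) (V p.1 p.2)‖ ≤ K := by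
  obtain ⟨K, hK⟩ :=
    (isCompact_Icc (a := (0 : ℝ)) (b := 1)).prod isCompact_Icc |>.exists_bound_of_continuousOn
      hΦ.continuousOn
  exact ⟨K, fun U V hU hV p => hK (U p.1 p.2, V p.1 p.2)
    ⟨hU.mem_Icc p.1 p.2, hV.mem_Icc p.1 p.2⟩⟩

theorem IsGraphon.integrable_comp₂ {Φ : ℝ → ℝ → ℝ} (hU : IsGraphon U) (hV : IsGraphon V)
    (hΦ : Continuous (Function.uncurry Φ)) :
    Integrable (fun p : ℝ × ℝ => Φ (U p.1 p.2) (V p.1 p.2)) squareMeasure := by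
  obtain ⟨K, hK⟩ := exists_norm_comp_le_of_isGraphon hΦ
  exact .of_bound (hΦ.measurable.comp (hU.measurable.prodMk hV.measurable)).aestronglyMeasurable K
    (Eventually.of_forall (hK U V hU hV))

theorem IsGraphon.integrable_comp {Φ : ℝ → ℝ} (hU : IsGraphon U) (hΦ : Continuous Φ) :
    Integrable (fun p : ℝ × ℝ => Φ (U p.1 p.2)) squareMeasure :=
  hU.integrable_comp₂ (Φ := fun a _ => Φ a) hU (hΦ.comp continuous_fst)

theorem IsGraphon.integrable (hU : IsGraphon U) :
    Integrable (fun p : ℝ × ℝ => U p.1 p.2) squareMeasure :=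
  hU.integrable_comp continuous_id

theorem IsGraphon.memLp (hU : IsGraphon U) {q : ENNReal} :
    MemLp (fun p : ℝ × ℝ => U p.1 p.2) q squareMeasure :=
  .of_bound hU.measurable.aestronglyMeasurable 1 <| .of_forall fun p => by
    rw [Real.norm_of_nonneg (hU.mem_Icc p.1 p.2).1]
    exact (hU.mem_Icc p.1 p.2).2

/-- Almost everywhere convergence on `[0,1]²` of a sequence of kernels. -/
def TendstoAE (f : ℕ → ℝ → ℝ → ℝ) (U : ℝ → ℝ → ℝ) : Prop :=
  ∀ᵐ p ∂squareMeasure, Tendsto (fun m => f m p.1 p.2) atTop (𝓝 (U p.1 p.2))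

theorem tendstoAE_const (U : ℝ → ℝ → ℝ) : TendstoAE (fun _ => U) U :=
  Eventually.of_forall fun _ => tendsto_const_nhds

theorem exists_isGraphon_tendstoAE (hf : ∀ m, IsGraphon (f m))
    (h : ∀ᵐ p ∂squareMeasure, ∃ c, Tendsto (fun m => f m p.1 p.2) atTop (𝓝 c)) :
    ∃ U, IsGraphon U ∧ TendstoAE f U := by
  refine ⟨fun x y => limsup (fun m => f m x y) atTop,
    ⟨fun x y => ?_, .limsup fun m => (hf m).measurable, fun x y => ⟨?_, ?_⟩⟩, ?_⟩
  · exact congrArg (limsup · atTop) (funext fun m => (hf m).1 x y)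
  · exact le_limsup_of_frequently_le (.of_forall fun m => ((hf m).mem_Icc x y).1)
      ⟨1, eventually_map.2 (.of_forall fun m => ((hf m).mem_Icc x y).2)⟩
  · exact limsup_le_of_le
      (IsBoundedUnder.isCoboundedUnder_le
        ⟨0, eventually_map.2 (.of_forall fun m => ((hf m).mem_Icc x y).1)⟩)
      (.of_forall fun m => ((hf m).mem_Icc x y).2)
  · filter_upwards [h] with p ⟨c, hc⟩
    rwa [hc.limsup_eq]

theorem TendstoAE.tendsto_integral_comp₂ {Φ : ℝ → ℝ → ℝ} (hΦ : Continuous (Function.uncurry Φ))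
    (hf : ∀ m, IsGraphon (f m)) (hg : ∀ m, IsGraphon (g m)) (hfU : TendstoAE f U)
    (hgV : TendstoAE g V) :
    Tendsto (fun m => ∫ p, Φ (f m p.1 p.2) (g m p.1 p.2) ∂squareMeasure) atTop
      (𝓝 (∫ p, Φ (U p.1 p.2) (V p.1 p.2) ∂squareMeasure)) := by
  obtain ⟨K, hK⟩ := exists_norm_comp_le_of_isGraphon hΦ
  refine tendsto_integral_of_dominated_convergence (fun _ => K)
    (fun m => ((hf m).integrable_comp₂ (hg m) hΦ).aestronglyMeasurable) (integrable_const _)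
    (fun m => Eventually.of_forall (hK _ _ (hf m) (hg m))) ?_
  filter_upwards [hfU, hgV] with p hfp hgp
  exact (hΦ.tendsto (_, _)).comp (hfp.prodMk_nhds hgp)

theorem TendstoAE.tendsto_integral_comp {Φ : ℝ → ℝ} (hΦ : Continuous Φ)
    (hf : ∀ m, IsGraphon (f m)) (hfU : TendstoAE f U) :
    Tendsto (fun m => ∫ p, Φ (f m p.1 p.2) ∂squareMeasure) atTop
      (𝓝 (∫ p, Φ (U p.1 p.2) ∂squareMeasure)) :=
  hfU.tendsto_integral_comp₂ (Φ := fun a _ => Φ a) (hΦ.comp continuous_fst) hf hf hfU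

theorem TendstoAE.tendsto_integral_abs_sub (hf : ∀ m, IsGraphon (f m)) (hV : IsGraphon V)
    (hfU : TendstoAE f U) :
    Tendsto (fun m => ∫ p, |f m p.1 p.2 - V p.1 p.2| ∂squareMeasure) atTop
      (𝓝 (∫ p, |U p.1 p.2 - V p.1 p.2| ∂squareMeasure)) :=
  hfU.tendsto_integral_comp₂ (Φ := fun a b => |a - b|) (by fun_prop) hf (fun _ => hV)
    (tendstoAE_const V)

/-! ### The entropy of a graphon -/

theorem binEnt_eq_binEntropy_div (x : ℝ) : binEnt x = Real.binEntropy x / Real.log 2 := by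
  simp only [binEnt, Real.binEntropy_eq_negMulLog_add_negMulLog_one_sub, Real.negMulLog, Real.logb]
  ring

theorem continuous_binEnt : Continuous binEnt := by
  rw [funext binEnt_eq_binEntropy_div]
  exact Real.binEntropy_continuous.div_const _

theorem binEnt_le_one (x : ℝ) : binEnt x ≤ 1 := by
  rw [binEnt_eq_binEntropy_div, div_le_one (Real.log_pos one_lt_two)]
  exact Real.binEntropy_le_log_two

theorem graphonEnt_eq_integral (hW : IsGraphon W) :
    graphonEnt W = ∫ p, binEnt (W p.1 p.2) ∂squareMeasure := by
  rw [integral_prod _ (hW.integrable_comp continuous_binEnt)]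
  rfl

theorem graphonEnt_le_one (hW : IsGraphon W) : graphonEnt W ≤ 1 :=
  calc graphonEnt W = ∫ p, binEnt (W p.1 p.2) ∂squareMeasure := graphonEnt_eq_integral hW
    _ ≤ ∫ _, 1 ∂squareMeasure :=
        integral_mono (hW.integrable_comp continuous_binEnt) (integrable_const _)
          fun _ => binEnt_le_one _
    _ = 1 := by simp

theorem TendstoAE.tendsto_graphonEnt (hf : ∀ m, IsGraphon (f m)) (hU : IsGraphon U)
    (hfU : TendstoAE f U) : Tendsto (fun m => graphonEnt (f m)) atTop (𝓝 (graphonEnt U)) := by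
  simp only [graphonEnt_eq_integral hU, graphonEnt_eq_integral (hf _)]
  exact hfU.tendsto_integral_comp continuous_binEnt hf

/-! ### Towers with orthogonal increments -/

/-- The energy `‖W‖₂²` of a kernel, the continuous counterpart of `blockEnergy`. -/
def kernelEnergy (W : ℝ → ℝ → ℝ) : ℝ := ∫ p, W p.1 p.2 ^ 2 ∂squareMeasure

/-- The increments of the sequence `U` are orthogonal in `L²`, as for a martingale; this is what is
left of the refinement of colourings once block averages are taken. -/
def HasOrthogonalIncrements (U : ℕ → ℝ → ℝ → ℝ) : Prop :=
  ∀ ⦃l k⦄, l ≤ k →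
    ∫ p, (U k p.1 p.2 - U l p.1 p.2) ^ 2 ∂squareMeasure = kernelEnergy (U k) - kernelEnergy (U l)

theorem TendstoAE.tendsto_kernelEnergy (hf : ∀ m, IsGraphon (f m)) (hfU : TendstoAE f U) :
    Tendsto (fun m => kernelEnergy (f m)) atTop (𝓝 (kernelEnergy U)) :=
  hfU.tendsto_integral_comp (continuous_pow 2) hf

theorem HasOrthogonalIncrements.of_tendstoAE {F : ℕ → ℕ → ℝ → ℝ → ℝ} {U : ℕ → ℝ → ℝ → ℝ}
    (hF : ∀ l m, IsGraphon (F l m)) (hFU : ∀ l, TendstoAE (F l) (U l))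
    (h : ∀ m, HasOrthogonalIncrements fun l => F l m) : HasOrthogonalIncrements U := by
  intro l k hlk
  have increments := (hFU k).tendsto_integral_comp₂ (Φ := fun a b => (a - b) ^ 2) (by fun_prop)
    (hF k) (hF l) (hFU l)
  have energies := ((hFU k).tendsto_kernelEnergy (hF k)).sub ((hFU l).tendsto_kernelEnergy (hF l))
  exact tendsto_nhds_unique increments (energies.congr fun m => (h m hlk).symm)

theorem HasOrthogonalIncrements.monotone_kernelEnergy {U : ℕ → ℝ → ℝ → ℝ}
    (h : HasOrthogonalIncrements U) : Monotone fun l => kernelEnergy (U l) := fun _ _ hlk =>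
  sub_nonneg.1 <| h hlk ▸ integral_nonneg fun _ => sq_nonneg _

theorem HasOrthogonalIncrements.exists_tendsto_kernelEnergy {U : ℕ → ℝ → ℝ → ℝ}
    (h : HasOrthogonalIncrements U) (hU : ∀ l, IsGraphon (U l)) :
    ∃ e, Tendsto (fun l => kernelEnergy (U l)) atTop (𝓝 e) ∧ ∀ l, kernelEnergy (U l) ≤ e := by
  have energy_le_one (l : ℕ) : kernelEnergy (U l) ≤ 1 := by
    calc kernelEnergy (U l) ≤ ∫ _, 1 ∂squareMeasure :=
          integral_mono ((hU l).integrable_comp (continuous_pow 2)) (integrable_const _) fun p =>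
            pow_le_one₀ ((hU l).mem_Icc p.1 p.2).1 ((hU l).mem_Icc p.1 p.2).2
      _ = 1 := by simp
  have tendsto_iSup := tendsto_atTop_ciSup h.monotone_kernelEnergy
    ⟨1, forall_mem_range.2 energy_le_one⟩
  exact ⟨_, tendsto_iSup, fun l => h.monotone_kernelEnergy.ge_of_tendsto tendsto_iSup l⟩

theorem eLpNorm_two_lt_ofReal {α : Type*} [MeasurableSpace α] {μ : Measure α} {u : α → ℝ} {r : ℝ}
    (hu : MemLp u 2 μ) (hr : 0 < r) (h : ∫ a, u a ^ 2 ∂μ < r ^ 2) :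
    eLpNorm u 2 μ < ENNReal.ofReal r := by
  rw [hu.eLpNorm_eq_integral_rpow_norm two_ne_zero ENNReal.ofNat_ne_top,
    ENNReal.ofReal_lt_ofReal_iff hr]
  simpa [← Real.sqrt_eq_rpow, Real.sqrt_lt' hr, ← one_div] using h

theorem HasOrthogonalIncrements.exists_subseq_tendstoAE {U : ℕ → ℝ → ℝ → ℝ}
    (h : HasOrthogonalIncrements U) (hU : ∀ l, IsGraphon (U l)) :
    ∃ W, IsGraphon W ∧ ∃ ψ : ℕ → ℕ, StrictMono ψ ∧ TendstoAE (fun j => U (ψ j)) W := by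
  obtain ⟨e, tendsto_e, energy_le⟩ := h.exists_tendsto_kernelEnergy hU
  obtain ⟨ψ, hψ, energy_gap⟩ := extraction_forall_of_eventually'
    (P := fun j l => e - kernelEnergy (U l) < ((1 / 2 : ℝ) ^ j) ^ 2) fun j => by
      have gap_tendsto : Tendsto (fun l => e - kernelEnergy (U l)) atTop (𝓝 0) := by
        simpa using tendsto_e.const_sub e
      exact eventually_atTop.1 (gap_tendsto.eventually (gt_mem_nhds (by positivity)))
  have sq_dist_lt {N n m : ℕ} (hNn : N ≤ n) (hNm : N ≤ m) :
      ∫ p, (U (ψ n) p.1 p.2 - U (ψ m) p.1 p.2) ^ 2 ∂squareMeasure < ((1 / 2 : ℝ) ^ N) ^ 2 := by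
    refine lt_of_le_of_lt ?_ (energy_gap N)
    rcases le_total m n with hmn | hnm
    · rw [h (hψ.monotone hmn)]
      exact sub_le_sub (energy_le _) (h.monotone_kernelEnergy (hψ.monotone hNm))
    · simp only [sub_sq_comm (U (ψ n) _ _)]
      rw [h (hψ.monotone hnm)]
      exact sub_le_sub (energy_le _) (h.monotone_kernelEnergy (hψ.monotone hNn))
  have cauchy {N n m : ℕ} (hNn : N ≤ n) (hNm : N ≤ m) :
      eLpNorm (fun p : ℝ × ℝ => U (ψ n) p.1 p.2 - U (ψ m) p.1 p.2) 2 squareMeasure <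
        ENNReal.ofReal ((1 / 2) ^ N) :=
    eLpNorm_two_lt_ofReal ((hU _).memLp.sub (hU _).memLp) (by positivity) (sq_dist_lt hNn hNm)
  obtain ⟨W, hW, tendsto_W⟩ := exists_isGraphon_tendstoAE (fun j => hU (ψ j)) <|
    Lp.ae_tendsto_of_cauchy_eLpNorm (p := 2) (fun j => (hU (ψ j)).measurable.aestronglyMeasurable)
      one_le_two (B := fun N => ENNReal.ofReal ((1 / 2) ^ N))
      summable_geometric_two.tsum_ofReal_ne_top fun N n m hNn hNm => cauchy hNn hNm
  exact ⟨W, hW, ψ, hψ, tendsto_W⟩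

theorem tendsto_zero_of_le_of_tendsto {a β : ℕ → ℝ} {b : ℕ → ℕ → ℝ} (ha : ∀ m, 0 ≤ a m)
    (hab : ∀ j m, a m ≤ b j m) (hb : ∀ j, Tendsto (b j) atTop (𝓝 (β j)))
    (hβ : Tendsto β atTop (𝓝 0)) : Tendsto a atTop (𝓝 0) := by
  refine tendsto_order.2 ⟨fun r hr => .of_forall fun m => hr.trans_le (ha m), fun r hr => ?_⟩
  obtain ⟨j, hj⟩ := (hβ.eventually (gt_mem_nhds hr)).exists
  filter_upwards [(hb j).eventually (gt_mem_nhds hj)] with m hm using (hab j m).trans_lt hm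

/-- Row `l` of the array `F` approximates `g` up to the square root of the energy gained between
rows `l` and `l + 1`; these gains tend to `0`, so the limit of the row limits is also the limit of
`g`. -/
theorem exists_isGraphon_tendsto_dCut {F : ℕ → ℕ → ℝ → ℝ → ℝ} {U : ℕ → ℝ → ℝ → ℝ}
    (hF : ∀ l m, IsGraphon (F l m)) (hg : ∀ m, IsGraphon (g m)) (hU : ∀ l, IsGraphon (U l))
    (hFU : ∀ l, TendstoAE (F l) (U l)) (horth : ∀ m, HasOrthogonalIncrements fun l => F l m)
    (hdCut : ∀ l m, dCut (g m) (F l m) ≤ √(kernelEnergy (F (l + 1) m) - kernelEnergy (F l m))) :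
    ∃ W, IsGraphon W ∧ Tendsto (fun m => dCut (g m) W) atTop (𝓝 0) ∧
      ∃ ψ : ℕ → ℕ, TendstoAE (fun j => U (ψ j)) W := by
  have U_orth : HasOrthogonalIncrements U := .of_tendstoAE hF hFU horth
  obtain ⟨W, hW, ψ, hψ, tendsto_W⟩ := U_orth.exists_subseq_tendstoAE hU
  refine ⟨W, hW, ?_, ψ, tendsto_W⟩
  refine tendsto_zero_of_le_of_tendsto (fun m => cutNorm_nonneg _)
    (b := fun j m => √(kernelEnergy (F (ψ j + 1) m) - kernelEnergy (F (ψ j) m)) +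
      ∫ p, |F (ψ j) m p.1 p.2 - W p.1 p.2| ∂squareMeasure)
    (β := fun j => √(kernelEnergy (U (ψ j + 1)) - kernelEnergy (U (ψ j))) +
      ∫ p, |U (ψ j) p.1 p.2 - W p.1 p.2| ∂squareMeasure) ?_ ?_ ?_
  · exact fun j m => (dCut_le_dCut_add_integral_abs (hg m).integrable (hF _ m).integrable
      hW.integrable).trans (add_le_add_left (hdCut _ m) _)
  · intro j
    have energy_tendsto (l : ℕ) := (hFU l).tendsto_kernelEnergy (hF l)
    exact ((energy_tendsto (ψ j + 1)).sub (energy_tendsto (ψ j))).sqrt.add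
      ((hFU (ψ j)).tendsto_integral_abs_sub (hF (ψ j)) hW)
  · obtain ⟨e, tendsto_e, -⟩ := U_orth.exists_tendsto_kernelEnergy hU
    have gain_tendsto := (((tendsto_add_atTop_iff_nat 1).2 tendsto_e).sub tendsto_e).comp
      hψ.tendsto_atTop
    have dist_tendsto := tendsto_W.tendsto_integral_abs_sub (fun j => hU (ψ j)) hW
    simpa using gain_tendsto.sqrt.add dist_tendsto

end GraphonLimits

/-! ### Compactness of sorted refining chains -/

theorem kernelEnergy_stepKernel {n : ℕ} [NeZero n] (B : Fin n × Fin n → ℝ) :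
    kernelEnergy (stepKernel B) = (∑ p, B p ^ 2) / (n : ℝ) ^ 2 :=
  integral_stepKernel fun p => B p ^ 2

theorem isGraphon_stepKernel_adjIndicator {n : ℕ} [NeZero n] (G : SimpleGraph (Fin n)) :
    IsGraphon (stepKernel (adjIndicator G)) :=
  isGraphon_stepKernel (adjIndicator_swap G) (adjIndicator_mem_Icc G)

theorem isGraphon_stepKernel_blockMean {n : ℕ} [NeZero n] (G : SimpleGraph (Fin n))
    (c : Fin n → ℕ) : IsGraphon (stepKernel (blockMean (adjIndicator G) c)) :=
  isGraphon_stepKernel (blockMean_adjIndicator_swap G c) (blockMean_adjIndicator_mem_Icc G c)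

theorem graphonEnt_stepKernel_blockMean {n : ℕ} [NeZero n] (G : SimpleGraph (Fin n))
    (c : Fin n → ℕ) :
    graphonEnt (stepKernel (blockMean (adjIndicator G) c)) =
      blockEntropy (adjIndicator G) c / (n : ℝ) ^ 2 := by
  rw [graphonEnt_eq_integral (isGraphon_stepKernel_blockMean G c)]
  exact integral_stepKernel fun p => binEnt (blockMean (adjIndicator G) c p)

theorem IsRefiningChain.hasOrthogonalIncrements {n : ℕ} [NeZero n] {A : Fin n × Fin n → ℝ}
    {c : ℕ → Fin n → ℕ} (h : IsRefiningChain A c) :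
    HasOrthogonalIncrements fun l => stepKernel (blockMean A (c l)) := by
  intro l k hlk
  obtain ⟨d, rfl⟩ := Nat.exists_eq_add_of_le hlk
  have coarsening : Prod.map (c l) (c l) =
      Prod.map (· / 4 ^ d) (· / 4 ^ d) ∘ Prod.map (c (l + d)) (c (l + d)) :=
    funext fun p => Prod.ext (h.div_pow l d p.1).symm (h.div_pow l d p.2).symm
  rw [kernelEnergy_stepKernel, kernelEnergy_stepKernel, ← sub_div, blockMean, blockMean,
    ← sum_sq_condMean_sub _ coarsening]
  exact integral_stepKernel fun p => (blockMean A (c (l + d)) p - blockMean A (c l) p) ^ 2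

theorem IsRefiningChain.dCut_le {n : ℕ} [NeZero n] {A : Fin n × Fin n → ℝ} {c : ℕ → Fin n → ℕ}
    (h : IsRefiningChain A c) (l : ℕ) :
    dCut (stepKernel A) (stepKernel (blockMean A (c l))) ≤
      √(kernelEnergy (stepKernel (blockMean A (c (l + 1)))) -
        kernelEnergy (stepKernel (blockMean A (c l)))) := by
  have hn : (0 : ℝ) < n := by exact_mod_cast NeZero.pos n
  have abs_boxSum_le (S T : Finset (Fin n)) : |boxSum (A - blockMean A (c l)) S T| ≤
      n * √(blockEnergy A (c (l + 1)) - blockEnergy A (c l)) := by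
    refine (Real.abs_le_sqrt (h.sq_boxSum_le l S T)).trans_eq ?_
    rw [Fintype.card_fin, Real.sqrt_mul (by positivity), Real.sqrt_sq hn.le]
  refine (cutNorm_stepKernel_le abs_boxSum_le).trans_eq ?_
  rw [kernelEnergy_stepKernel, kernelEnergy_stepKernel, ← sub_div,
    Real.sqrt_div' _ (sq_nonneg (n : ℝ)), Real.sqrt_sq hn.le, blockEnergy, blockEnergy]
  field_simp

theorem lt_iff_le_card_filter_div {n : ℕ} [NeZero n] {c : Fin n → ℕ} (hc : Monotone c) {x : ℝ}
    (hx : x ∈ Ioc (0 : ℝ) 1) (a : ℕ) :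
    c (gridIndex n x) < a ↔ x ≤ (#{v | c v < a} : ℝ) / n := by
  have hn : (0 : ℝ) < n := by exact_mod_cast NeZero.pos n
  have le_iff_gridIndex_lt (k : ℕ) : x ≤ (k : ℝ) / n ↔ (gridIndex n x : ℕ) < k := by
    rw [le_div_iff₀' hn, ← Int.cast_natCast k, ← Int.ceil_le, ceil_eq_gridIndex_add_one hx]
    omega
  rw [le_iff_gridIndex_lt]
  constructor
  · intro h
    have initial_subset : Finset.Iic (gridIndex n x) ⊆ ({v | c v < a} : Finset (Fin n)) :=
      fun v hv => by simpa using (hc (Finset.mem_Iic.1 hv)).trans_lt h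
    simpa [Fin.card_Iic] using Finset.card_le_card initial_subset
  · intro h
    by_contra hxa
    have subset_initial : ({v | c v < a} : Finset (Fin n)) ⊆ Finset.Iio (gridIndex n x) :=
      fun v hv => Finset.mem_Iio.2 <| not_le.1 fun hle =>
        hxa ((hc hle).trans_lt (Finset.mem_filter.1 hv).2)
    exact h.not_ge (by simpa [Fin.card_Iio] using Finset.card_le_card subset_initial)

theorem exists_eventually_eq_of_eventually_lt_iff {d : ℕ → ℕ} {r : ℕ} (hd : ∀ m, d m < r)
    {P : ℕ → Prop} (h : ∀ a, ∀ᶠ m in atTop, (d m < a ↔ P a)) : ∃ k, ∀ᶠ m in atTop, d m = k := by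
  have lt_iff : ∀ᶠ m in atTop, ∀ a ∈ Finset.range (r + 1), (d m < a ↔ P a) :=
    (eventually_all_finset _).2 fun a _ => h a
  obtain ⟨m₀, hm₀⟩ := lt_iff.exists
  refine ⟨d m₀, lt_iff.mono fun m hm => le_antisymm ?_ ?_⟩
  · have hmem : d m₀ + 1 ∈ Finset.range (r + 1) := by simpa using hd m₀
    exact Nat.lt_succ_iff.1 ((hm _ hmem).2 ((hm₀ _ hmem).1 (Nat.lt_succ_self _)))
  · have hmem : d m + 1 ∈ Finset.range (r + 1) := by simpa using hd m
    exact Nat.lt_succ_iff.1 ((hm₀ _ hmem).2 ((hm _ hmem).1 (Nat.lt_succ_self _)))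

section Sorted

variable {n : ℕ → ℕ} [∀ m, NeZero (n m)]

theorem exists_eventually_gridIndex_eq {c : ∀ m, Fin (n m) → ℕ} {r : ℕ} {θ : ℕ → ℝ} {x : ℝ}
    (hc : ∀ᶠ m in atTop, Monotone (c m)) (hlt : ∀ m v, c m v < r)
    (hθ : ∀ a, Tendsto (fun m => (#{v | c m v < a} : ℝ) / n m) atTop (𝓝 (θ a)))
    (hx : x ∈ Ioc (0 : ℝ) 1) (hxθ : x ∉ range θ) :
    ∃ k, ∀ᶠ m in atTop, c m (gridIndex (n m) x) = k := by
  refine exists_eventually_eq_of_eventually_lt_iff (fun m => hlt m _) (P := fun a => x ≤ θ a)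
    fun a => ?_
  have x_ne : x ≠ θ a := fun hxa => hxθ ⟨a, hxa.symm⟩
  rcases lt_or_gt_of_ne x_ne with h | h
  · filter_upwards [hc, (hθ a).eventually (lt_mem_nhds h)] with m hm hlt
    exact iff_of_true ((lt_iff_le_card_filter_div hm hx a).2 hlt.le) h.le
  · filter_upwards [hc, (hθ a).eventually (gt_mem_nhds h)] with m hm hgt
    exact iff_of_false (fun hca => hgt.not_ge ((lt_iff_le_card_filter_div hm hx a).1 hca)) h.not_ge

theorem ae_exists_tendsto_stepKernel_blockMean {A : ∀ m, Fin (n m) × Fin (n m) → ℝ}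
    {c : ∀ m, Fin (n m) → ℕ} {r : ℕ} {θ : ℕ → ℝ} {D : ℕ × ℕ → ℝ}
    (hc : ∀ᶠ m in atTop, Monotone (c m)) (hlt : ∀ m v, c m v < r)
    (hθ : ∀ a, Tendsto (fun m => (#{v | c m v < a} : ℝ) / n m) atTop (𝓝 (θ a)))
    (hD : ∀ q, Tendsto (fun m => fiberMean (A m) (Prod.map (c m) (c m)) q) atTop (𝓝 (D q))) :
    ∀ᵐ p ∂squareMeasure, ∃ a,
      Tendsto (fun m => stepKernel (blockMean (A m) (c m)) p.1 p.2) atTop (𝓝 a) := by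
  have ae_notMem_range : ∀ᵐ x ∂unitMeasure, x ∉ range θ :=
    ae_restrict_of_ae ((countable_range θ).ae_notMem volume)
  filter_upwards [ae_squareMeasure_of_ae (ae_unitMeasure_mem_Ioc.and ae_notMem_range)]
    with p ⟨⟨hx, hxθ⟩, hy, hyθ⟩
  obtain ⟨i, hi⟩ := exists_eventually_gridIndex_eq hc hlt hθ hx hxθ
  obtain ⟨j, hj⟩ := exists_eventually_gridIndex_eq hc hlt hθ hy hyθ
  refine ⟨D (i, j), (hD (i, j)).congr' ?_⟩
  filter_upwards [hi, hj] with m him hjm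
  rw [← him, ← hjm]
  rfl

theorem exists_subseq_forall_tendsto {ι : Type*} [Countable ι] {b : ℕ → ι → ℝ}
    (hb : ∀ m i, b m i ∈ Icc (0 : ℝ) 1) :
    ∃ β : ι → ℝ, ∃ φ : ℕ → ℕ, StrictMono φ ∧
      ∀ i, Tendsto (fun m => b (φ m) i) atTop (𝓝 (β i)) := by
  obtain ⟨β, -, φ, hφ, hlim⟩ :=
    (isCompact_univ_pi fun _ : ι => isCompact_Icc (a := (0 : ℝ)) (b := 1)).tendsto_subseq
      fun m i _ => hb m i
  exact ⟨β, φ, hφ, tendsto_pi_nhds.1 hlim⟩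

/-- Since the colourings are monotone, the step kernels are determined by two bounded families of
reals, the relative thresholds at which the colour increases and the block averages, so a diagonal
subsequence suffices. -/
theorem exists_subseq_ae_exists_tendsto_stepKernel {A : ∀ m, Fin (n m) × Fin (n m) → ℝ}
    {c : ∀ m, ℕ → Fin (n m) → ℕ} {r : ℕ → ℕ} (hA : ∀ m p, A m p ∈ Icc (0 : ℝ) 1)
    (hc : ∀ l, ∀ᶠ m in atTop, Monotone (c m l)) (hlt : ∀ l m v, c m l v < r l) :
    ∃ φ : ℕ → ℕ, StrictMono φ ∧ ∀ l, ∀ᵐ p ∂squareMeasure, ∃ a,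
      Tendsto (fun m => stepKernel (blockMean (A (φ m)) (c (φ m) l)) p.1 p.2) atTop (𝓝 a) := by
  obtain ⟨β, φ, hφ, hlim⟩ := exists_subseq_forall_tendsto
    (b := fun m => Sum.elim (fun q : ℕ × ℕ => (#{v | c m q.1 v < q.2} : ℝ) / n m)
      fun q : ℕ × ℕ × ℕ => fiberMean (A m) (Prod.map (c m q.1) (c m q.1)) q.2) <| by
    rintro m (q | q)
    · refine ⟨by simp only [Sum.elim_inl]; positivity, div_le_one_of_le₀ ?_ (Nat.cast_nonneg _)⟩
      exact_mod_cast (Finset.card_filter_le _ _).trans_eq (Finset.card_fin _)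
    · exact fiberMean_mem_Icc (hA m) _ _
  refine ⟨φ, hφ, fun l => ?_⟩
  exact ae_exists_tendsto_stepKernel_blockMean (hφ.tendsto_atTop.eventually (hc l))
    (fun m => hlt l (φ m)) (fun a => hlim (.inl (l, a))) fun q => hlim (.inr (l, q))

theorem exists_isGraphon_tendsto_deltaCut {G : ∀ m, SimpleGraph (Fin (n m))}
    {c : ∀ m, ℕ → Fin (n m) → ℕ} {r : ℕ → ℝ} {t : ℝ}
    (hchain : ∀ m, IsRefiningChain (adjIndicator (G m)) (c m))
    (hmono : ∀ m, ∀ l ≤ m, Monotone (c m l)) (hr : Tendsto r atTop (𝓝 t))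
    (hent : ∀ m, ∀ l ≤ m, r m ≤ blockEntropy (adjIndicator (G m)) (c m l) / (n m : ℝ) ^ 2) :
    ∃ W, IsGraphon W ∧ t ≤ graphonEnt W ∧ ∃ φ : ℕ → ℕ, StrictMono φ ∧
      Tendsto (fun m => deltaCut (graphonOfGraph (G (φ m))) W) atTop (𝓝 0) := by
  obtain ⟨φ, hφ, ae_tendsto⟩ := exists_subseq_ae_exists_tendsto_stepKernel
    (fun m => adjIndicator_mem_Icc (G m))
    (fun l => (eventually_ge_atTop l).mono fun m => hmono m l) fun l m => (hchain m).lt l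
  have isGraphon_step (l m : ℕ) := isGraphon_stepKernel_blockMean (G (φ m)) (c (φ m) l)
  choose U hU tendsto_U using fun l => exists_isGraphon_tendstoAE (isGraphon_step l) (ae_tendsto l)
  have le_graphonEnt_U (l : ℕ) : t ≤ graphonEnt (U l) := by
    refine le_of_tendsto_of_tendsto (hr.comp hφ.tendsto_atTop)
      ((tendsto_U l).tendsto_graphonEnt (isGraphon_step l) (hU l)) ?_
    filter_upwards [hφ.tendsto_atTop.eventually_ge_atTop l] with m hm
    rw [graphonEnt_stepKernel_blockMean]
    exact hent (φ m) l hm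
  obtain ⟨W, hW, tendsto_dCut, ψ, tendsto_W⟩ := exists_isGraphon_tendsto_dCut isGraphon_step
    (fun m => isGraphon_stepKernel_adjIndicator (G (φ m))) hU tendsto_U
    (fun m => (hchain (φ m)).hasOrthogonalIncrements) fun l m => (hchain (φ m)).dCut_le l
  refine ⟨W, hW, ?_, φ, hφ, squeeze_zero (fun _ => deltaCut_nonneg _ _)
    (fun m => deltaCut_graphonOfGraph_le (G (φ m)) W) tendsto_dCut⟩
  exact ge_of_tendsto (tendsto_W.tendsto_graphonEnt (fun j => hU (ψ j)) hW)
    (.of_forall fun j => le_graphonEnt_U (ψ j))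

end Sorted

/-! ### The upper bound -/

theorem le_div_sq_of_two_rpow_le {n : ℕ} [NeZero n] {t K b : ℝ}
    (h : (2 : ℝ) ^ (t * choose2 n) ≤ 2 ^ (K * n + b / 2)) :
    t * (1 - 1 / n) - 2 * (K / n) ≤ b / (n : ℝ) ^ 2 := by
  have hn : (0 : ℝ) < n := by exact_mod_cast NeZero.pos n
  rw [Real.rpow_le_rpow_left_iff one_lt_two, choose2] at h
  rw [le_div_iff₀ (by positivity)]
  field_simp
  linarith

theorem tendsto_div_zero_of_mul_le {K n : ℕ → ℕ} (h : ∀ m, (m + 1) * (K m + 1) ≤ n m) :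
    Tendsto (fun m => (K m : ℝ) / n m) atTop (𝓝 0) := by
  refine squeeze_zero (fun _ => by positivity) (fun m => ?_)
    tendsto_one_div_add_atTop_nhds_zero_nat
  have n_pos : 0 < n m := (by positivity : 0 < (m + 1) * (K m + 1)).trans_le (h m)
  rw [div_le_div_iff₀ (by exact_mod_cast n_pos) (by positivity)]
  exact_mod_cast (by nlinarith [h m] : K m * (m + 1) ≤ 1 * n m)

theorem eventually_card_le_two_rpow {Q : GraphClass} (hQ : IsGraphClass Q) {t : ℝ}
    (ht : ∀ W ∈ limitSet Q, graphonEnt W < t) :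
    ∀ᶠ n in atTop, (Nat.card (Q n) : ℝ) ≤ 2 ^ (t * choose2 n) := by
  by_contra hfreq
  choose K hK using exists_monotone_isRefiningChain
  have large (m : ℕ) := frequently_atTop.1 (not_eventually.1 hfreq) ((m + 1) * (K m + 1))
  choose n n_ge lt_card using large
  have (m : ℕ) : NeZero (n m) :=
    ⟨((by positivity : 0 < (m + 1) * (K m + 1)).trans_le (n_ge m)).ne'⟩
  have Q_nonempty (m : ℕ) : (Q (n m)).Nonempty := by
    by_contra hempty
    rw [not_nonempty_iff_eq_empty] at hempty
    refine lt_card m ?_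
    rw [hempty, Nat.card_of_isEmpty, Nat.cast_zero]
    positivity
  choose G hG c hchain hmono using fun m => hK m hQ (Q_nonempty m)
  have n_tendsto : Tendsto n atTop atTop :=
    tendsto_atTop_mono (fun m => (by nlinarith : m ≤ (m + 1) * (K m + 1)).trans (n_ge m))
      tendsto_id
  have rate_tendsto : Tendsto (fun m => t * (1 - 1 / n m) - 2 * ((K m : ℝ) / n m)) atTop (𝓝 t) := by
    have inv_tendsto := (tendsto_one_div_atTop_nhds_zero_nat (𝕜 := ℝ)).comp n_tendsto
    simpa using
      ((inv_tendsto.const_sub 1).const_mul t).sub ((tendsto_div_zero_of_mul_le n_ge).const_mul 2)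
  obtain ⟨W, hW, le_ent, φ, hφ, tendsto_deltaCut⟩ := exists_isGraphon_tendsto_deltaCut hchain
    (fun m l hl => (hmono m l hl).1) rate_tendsto fun m l hl =>
      le_div_sq_of_two_rpow_le ((not_le.1 (lt_card m)).le.trans (hmono m l hl).2)
  exact (ht W ⟨hW, n ∘ φ, fun m => G (φ m), fun m => hG _, n_tendsto.comp hφ.tendsto_atTop,
    tendsto_deltaCut⟩).not_ge le_ent

/-! ### The counting lemma -/

theorem cutNorm_neg (U : ℝ → ℝ → ℝ) : cutNorm (-U) = cutNorm U := by
  unfold cutNorm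
  simp only [Pi.neg_apply, integral_neg, abs_neg]

theorem integral_unitMeasure_indicator_Iio {a : ℝ} (ha : a ∈ Icc (0 : ℝ) 1) :
    ∫ u, (Iio a).indicator 1 u ∂unitMeasure = a := by
  have inter_eq : Iio a ∩ Icc 0 1 = Ico 0 a := by
    ext u
    simp only [mem_inter_iff, mem_Iio, mem_Icc, mem_Ico]
    exact ⟨fun h => ⟨h.2.1, h.1⟩, fun h => ⟨h.2, h.1, h.2.le.trans ha.2⟩⟩
  rw [integral_indicator_one measurableSet_Iio, unitMeasure,
    measureReal_restrict_apply measurableSet_Iio, inter_eq, Real.volume_real_Ico_of_le ha.1,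
    sub_zero]

/-- Layer-cake: `f` and `g` are averages of indicator functions of their superlevel sets. -/
theorem abs_integral_mul_mul_le_cutNorm {U : ℝ → ℝ → ℝ}
    (hU : Integrable (fun p : ℝ × ℝ => U p.1 p.2) squareMeasure) {f g : ℝ → ℝ}
    (mf : Measurable f) (mg : Measurable g) (hf : ∀ x, f x ∈ Icc (0 : ℝ) 1)
    (hg : ∀ x, g x ∈ Icc (0 : ℝ) 1) :
    |∫ p, U p.1 p.2 * (f p.1 * g p.2) ∂squareMeasure| ≤ cutNorm U := by
  let superlevel (q : ℝ × ℝ) : Set (ℝ × ℝ) := (f ⁻¹' Ioi q.1) ×ˢ (g ⁻¹' Ioi q.2)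
  let layer (p q : ℝ × ℝ) : ℝ := (superlevel q).indicator (fun p => U p.1 p.2) p
  have integral_layer (p : ℝ × ℝ) :
      ∫ q, layer p q ∂squareMeasure = U p.1 p.2 * (f p.1 * g p.2) := by
    rw [← integral_unitMeasure_indicator_Iio (hf p.1),
      ← integral_unitMeasure_indicator_Iio (hg p.2), ← integral_prod_mul, ← integral_const_mul]
    refine integral_congr_ae (.of_forall fun q => ?_)
    simp only [layer, superlevel, indicator, mem_prod, mem_preimage, mem_Ioi, mem_Iio, ite_and,
      Pi.one_apply, mul_ite, mul_one, mul_zero]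
    split_ifs <;> rfl
  have integrable_layer :
      Integrable (Function.uncurry layer) (squareMeasure.prod squareMeasure) := by
    have measurable_subgraphs : MeasurableSet
        {z : (ℝ × ℝ) × (ℝ × ℝ) | z.2.1 < f z.1.1 ∧ z.2.2 < g z.1.2} :=
      .inter (measurableSet_lt measurable_snd.fst (mf.comp measurable_fst.fst))
        (measurableSet_lt measurable_snd.snd (mg.comp measurable_fst.snd))
    exact (hU.comp_fst squareMeasure).indicator measurable_subgraphs
  have abs_integral_layer_le (q : ℝ × ℝ) : ‖∫ p, layer p q ∂squareMeasure‖ ≤ cutNorm U := by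
    rw [integral_indicator ((mf measurableSet_Ioi).prod (mg measurableSet_Ioi)), squareMeasure,
      ← Measure.prod_restrict, unitMeasure, Measure.restrict_restrict (mf measurableSet_Ioi),
      Measure.restrict_restrict (mg measurableSet_Ioi), Measure.prod_restrict]
    exact abs_setIntegral_le_cutNorm hU ((mf measurableSet_Ioi).inter measurableSet_Icc)
      ((mg measurableSet_Ioi).inter measurableSet_Icc) inter_subset_right inter_subset_right
  calc |∫ p, U p.1 p.2 * (f p.1 * g p.2) ∂squareMeasure|
      = ‖∫ q, ∫ p, layer p q ∂squareMeasure ∂squareMeasure‖ := by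
        simp only [← integral_layer]
        rw [integral_integral_swap integrable_layer, Real.norm_eq_abs]
    _ ≤ cutNorm U := by
        simpa using norm_integral_le_of_norm_le_const (μ := squareMeasure)
          (.of_forall abs_integral_layer_le)

section Sampling

theorem integral_comp_of_measurePreserving {α β : Type*} [MeasurableSpace α] [MeasurableSpace β]
    {μ : Measure α} {ν : Measure β} {f : α → β} (hf : MeasurePreserving f μ ν) {g : β → ℝ}
    (hg : AEStronglyMeasurable g ν) : ∫ x, g (f x) ∂μ = ∫ y, g y ∂ν := by
  rw [← hf.map_eq] at hg ⊢
  exact (integral_map hf.measurable.aemeasurable hg).symm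

variable {V : Type*} [Fintype V]

theorem measurePreserving_update [DecidableEq V] {α : V → Type*} [∀ i, MeasurableSpace (α i)]
    (μ : ∀ i, Measure (α i)) [∀ i, IsProbabilityMeasure (μ i)] (i : V) :
    MeasurePreserving (fun z : (∀ j, α j) × α i => Function.update z.1 i z.2)
      ((Measure.pi μ).prod (μ i)) (Measure.pi μ) := by
  have preimage_eq (S : ∀ j, Set (α j)) :
      (fun z : (∀ j, α j) × α i => Function.update z.1 i z.2) ⁻¹' univ.pi S =
        univ.pi (Function.update S i univ) ×ˢ S i := by
    ext z
    simp only [mem_preimage, mem_univ_pi, mem_prod]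
    refine ⟨fun h => ⟨fun j => ?_, by simpa using h i⟩, fun h j => ?_⟩ <;>
      rcases eq_or_ne j i with rfl | hj
    · simp
    · simpa [hj] using h j
    · simpa using h.2
    · simpa [hj] using h.1 j
  refine ⟨measurable_update', (Measure.pi_eq fun S hS => ?_).symm⟩
  rw [Measure.map_apply measurable_update' (.univ_pi hS), preimage_eq, Measure.prod_prod,
    Measure.pi_pi, ← Finset.prod_erase_mul _ _ (Finset.mem_univ i),
    ← Finset.prod_erase_mul Finset.univ (fun j => μ j (S j)) (Finset.mem_univ i)]
  simp only [Function.update_self, measure_univ, mul_one]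
  congr 1
  exact Finset.prod_congr rfl fun j hj => by rw [Function.update_of_ne (Finset.ne_of_mem_erase hj)]

theorem measurePreserving_eval_pair {α : V → Type*} [∀ i, MeasurableSpace (α i)]
    (μ : ∀ i, Measure (α i)) [∀ i, IsProbabilityMeasure (μ i)] {i j : V} (hij : i ≠ j) :
    MeasurePreserving (fun x : ∀ k, α k => (x i, x j)) (Measure.pi μ) ((μ i).prod (μ j)) := by
  refine ⟨by fun_prop, ?_⟩
  have indep := (ProbabilityTheory.iIndepFun_pi (μ := μ) (X := fun _ => id)
    fun _ => aemeasurable_id).indepFun hij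
  have map_eq := (ProbabilityTheory.indepFun_iff_map_prod_eq_prod_map_map
    (measurable_pi_apply i).aemeasurable (measurable_pi_apply j).aemeasurable).1 indep
  simpa only [id, (measurePreserving_eval μ _).map_eq] using map_eq

/-- Lebesgue measure on the cube `[0,1]^V`: the law of independent uniform vertex labels. -/
abbrev cubeMeasure (V : Type*) [Fintype V] : Measure (V → ℝ) := Measure.pi fun _ => unitMeasure

theorem integral_cubeMeasure_pair {i j : V} (hij : i ≠ j) {g : ℝ × ℝ → ℝ}
    (hg : AEStronglyMeasurable g squareMeasure) :
    ∫ x, g (x i, x j) ∂cubeMeasure V = ∫ p, g p ∂squareMeasure :=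
  integral_comp_of_measurePreserving
    (measurePreserving_eval_pair (fun _ : V => unitMeasure) hij) hg

variable [DecidableEq V]

theorem integral_cubeMeasure_update_update (i j : V) {H : (V → ℝ) → ℝ}
    (hH : Integrable H (cubeMeasure V)) :
    ∫ x, H x ∂cubeMeasure V =
      ∫ x, ∫ p, H (Function.update (Function.update x i p.1) j p.2) ∂squareMeasure
        ∂cubeMeasure V := by
  have resample := (measurePreserving_update (fun _ : V => unitMeasure) j).comp <|
    ((measurePreserving_update (fun _ : V => unitMeasure) i).prod (.id unitMeasure)).comp
      (measurePreserving_prodAssoc (cubeMeasure V) unitMeasure unitMeasure).symm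
  exact (integral_comp_of_measurePreserving resample hH.aestronglyMeasurable).symm.trans
    (integral_prod _ (resample.integrable_comp_of_integrable hH))

theorem abs_integral_mul_mul_le_cutNorm_of_update {i j : V} (hij : i ≠ j) {U : ℝ → ℝ → ℝ}
    (hU : Integrable (fun p : ℝ × ℝ => U p.1 p.2) squareMeasure) {F G : (V → ℝ) → ℝ}
    (mF : Measurable F) (mG : Measurable G) (hF : ∀ x, F x ∈ Icc (0 : ℝ) 1)
    (hG : ∀ x, G x ∈ Icc (0 : ℝ) 1) (update_F : ∀ x t, F (Function.update x j t) = F x)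
    (update_G : ∀ x t, G (Function.update x i t) = G x) :
    |∫ x, U (x i) (x j) * (F x * G x) ∂cubeMeasure V| ≤ cutNorm U := by
  have integrable_integrand :
      Integrable (fun x => U (x i) (x j) * (F x * G x)) (cubeMeasure V) := by
    have integrable_pair : Integrable (fun x : V → ℝ => U (x i) (x j)) (cubeMeasure V) :=
      (measurePreserving_eval_pair (fun _ : V => unitMeasure) hij).integrable_comp_of_integrable hU
    refine integrable_pair.mul_bdd (c := 1) (mF.mul mG).aestronglyMeasurable
      (.of_forall fun x => ?_)
    have hFG := unitInterval.mul_mem (hF x) (hG x)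
    exact (Real.norm_of_nonneg hFG.1).trans_le hFG.2
  have integrand_update (x : V → ℝ) (p : ℝ × ℝ) :
      let y := Function.update (Function.update x i p.1) j p.2
      U (y i) (y j) * (F y * G y) =
        U p.1 p.2 * (F (Function.update x i p.1) * G (Function.update x j p.2)) := by
    simp only [update_F]
    rw [Function.update_comm hij, update_G]
    simp [Function.update_of_ne hij.symm]
  have inner_le (x : V → ℝ) : ‖∫ p, U p.1 p.2 * (F (Function.update x i p.1) *
      G (Function.update x j p.2)) ∂squareMeasure‖ ≤ cutNorm U :=
    abs_integral_mul_mul_le_cutNorm hU (mF.comp (measurable_update x))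
      (mG.comp (measurable_update x)) (fun _ => hF _) fun _ => hG _
  rw [integral_cubeMeasure_update_update i j integrable_integrand]
  simp only [integrand_update]
  simpa using norm_integral_le_of_norm_le_const (μ := cubeMeasure V) (.of_forall inner_le)

end Sampling

section KernelProd

variable {V : Type*} {φ ψ : V × V → ℝ → ℝ → ℝ} {s : Finset (V × V)}

/-- The product over the pairs `(i, j) ∈ s` of the kernels `φ (i, j)` evaluated at the vertex labels
`x i` and `x j`; kernels may differ between pairs so that they can be exchanged one at a time. -/
def kernelProd (s : Finset (V × V)) (φ : V × V → ℝ → ℝ → ℝ) (x : V → ℝ) : ℝ :=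
  ∏ p ∈ s, φ p (x p.1) (x p.2)

theorem kernelProd_congr (h : ∀ p ∈ s, φ p = ψ p) : kernelProd s φ = kernelProd s ψ :=
  funext fun _ => Finset.prod_congr rfl fun p hp => by rw [h p hp]

theorem measurable_kernelProd (hφ : ∀ p, IsGraphon (φ p)) : Measurable (kernelProd s φ) := by
  refine Finset.measurable_fun_prod _ fun p _ => ?_
  have measurable_labels : Measurable fun x : V → ℝ => (x p.1, x p.2) := by fun_prop
  exact (hφ p).measurable.comp measurable_labels

theorem kernelProd_mem_Icc (hφ : ∀ p, IsGraphon (φ p)) (x : V → ℝ) :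
    kernelProd s φ x ∈ Icc (0 : ℝ) 1 :=
  ⟨Finset.prod_nonneg fun p _ => ((hφ p).mem_Icc _ _).1,
    Finset.prod_le_one (fun p _ => ((hφ p).mem_Icc _ _).1) fun p _ => ((hφ p).mem_Icc _ _).2⟩

theorem kernelProd_update_of_forall_ne [DecidableEq V] {i : V}
    (h : ∀ p ∈ s, p.1 ≠ i ∧ p.2 ≠ i) (x : V → ℝ) (t : ℝ) :
    kernelProd s φ (Function.update x i t) = kernelProd s φ x :=
  Finset.prod_congr rfl fun p hp => by
    rw [Function.update_of_ne (h p hp).1, Function.update_of_ne (h p hp).2]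

variable [Fintype V]

theorem integrable_kernelProd (hφ : ∀ p, IsGraphon (φ p)) :
    Integrable (kernelProd s φ) (cubeMeasure V) :=
  .of_bound (measurable_kernelProd hφ).aestronglyMeasurable 1 <| .of_forall fun x =>
    (Real.norm_of_nonneg (kernelProd_mem_Icc hφ x).1).trans_le (kernelProd_mem_Icc hφ x).2

variable [LinearOrder V] {e : V × V}

theorem abs_integral_mul_kernelProd_erase_le_cutNorm (hφ : ∀ p, IsGraphon (φ p)) {D : ℝ → ℝ → ℝ}
    (hD : Integrable (fun p : ℝ × ℝ => D p.1 p.2) squareMeasure) (he : e ∈ ltPairs V) :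
    |∫ x, D (x e.1) (x e.2) * kernelProd ((ltPairs V).erase e) φ x ∂cubeMeasure V| ≤
      cutNorm D := by
  have hlt : e.1 < e.2 := mem_ltPairs.1 he
  let incident (p : V × V) : Prop := p.1 = e.1 ∨ p.2 = e.1
  have split (x : V → ℝ) : kernelProd ((ltPairs V).erase e) φ x =
      kernelProd {p ∈ (ltPairs V).erase e | incident p} φ x *
        kernelProd {p ∈ (ltPairs V).erase e | ¬incident p} φ x :=
    (Finset.prod_filter_mul_prod_filter_not _ incident _).symm
  simp only [split]
  refine abs_integral_mul_mul_le_cutNorm_of_update hlt.ne hD (measurable_kernelProd hφ)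
    (measurable_kernelProd hφ) (kernelProd_mem_Icc hφ) (kernelProd_mem_Icc hφ)
    (kernelProd_update_of_forall_ne fun p hp => ?_) (kernelProd_update_of_forall_ne fun p hp => ?_)
  · simp only [Finset.mem_filter, Finset.mem_erase, mem_ltPairs, incident] at hp
    grind
  · simpa only [incident, not_or] using (Finset.mem_filter.1 hp).2

theorem abs_integral_kernelProd_update_sub_le {U : ℝ → ℝ → ℝ} (hφ : ∀ p, IsGraphon (φ p))
    (hU : IsGraphon U) (he : e ∈ ltPairs V) :
    |∫ x, kernelProd (ltPairs V) (Function.update φ e U) x ∂cubeMeasure V -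
      ∫ x, kernelProd (ltPairs V) φ x ∂cubeMeasure V| ≤ dCut U (φ e) := by
  have update_isGraphon (p : V × V) : IsGraphon (Function.update φ e U p) := by
    rcases eq_or_ne p e with rfl | hp
    · simpa using hU
    · simpa [hp] using hφ p
  have eq_mul_erase (ψ : V × V → ℝ → ℝ → ℝ) (x : V → ℝ) : kernelProd (ltPairs V) ψ x =
      ψ e (x e.1) (x e.2) * kernelProd ((ltPairs V).erase e) ψ x :=
    (Finset.mul_prod_erase _ _ he).symm
  have erase_update : kernelProd ((ltPairs V).erase e) (Function.update φ e U) =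
      kernelProd ((ltPairs V).erase e) φ :=
    kernelProd_congr fun p hp => Function.update_of_ne (Finset.ne_of_mem_erase hp) _ _
  rw [← integral_sub (integrable_kernelProd update_isGraphon) (integrable_kernelProd hφ)]
  simp only [eq_mul_erase, erase_update, Function.update_self, ← sub_mul]
  exact abs_integral_mul_kernelProd_erase_le_cutNorm (D := fun x y => U x y - φ e x y) hφ
    (hU.integrable.sub (hφ e).integrable) he

theorem abs_integral_kernelProd_sub_le (hφ : ∀ p, IsGraphon (φ p)) (hψ : ∀ p, IsGraphon (ψ p)) :
    |∫ x, kernelProd (ltPairs V) φ x ∂cubeMeasure V -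
      ∫ x, kernelProd (ltPairs V) ψ x ∂cubeMeasure V| ≤ ∑ p ∈ ltPairs V, dCut (φ p) (ψ p) := by
  have piecewise_isGraphon (s : Finset (V × V)) (p : V × V) : IsGraphon (s.piecewise φ ψ p) :=
    s.piecewise_cases φ ψ IsGraphon (hφ p) (hψ p)
  have exchange (s : Finset (V × V)) (hs : s ⊆ ltPairs V) :
      |∫ x, kernelProd (ltPairs V) (s.piecewise φ ψ) x ∂cubeMeasure V -
        ∫ x, kernelProd (ltPairs V) ψ x ∂cubeMeasure V| ≤ ∑ p ∈ s, dCut (φ p) (ψ p) := by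
    induction s using Finset.induction_on with
    | empty => simp
    | insert e s hes ih =>
      obtain ⟨he, hs⟩ := Finset.insert_subset_iff.1 hs
      have exchange_one := abs_integral_kernelProd_update_sub_le (piecewise_isGraphon s) (hφ e) he
      rw [← s.piecewise_insert φ ψ, s.piecewise_eq_of_notMem φ ψ hes] at exchange_one
      rw [Finset.sum_insert hes]
      exact (abs_sub_le _ _ _).trans (add_le_add exchange_one (ih hs))
  have piecewise_eq : kernelProd (ltPairs V) ((ltPairs V).piecewise φ ψ) =
      kernelProd (ltPairs V) φ :=
    kernelProd_congr fun p hp => Finset.piecewise_eq_of_mem _ _ _ hp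
  simpa only [piecewise_eq] using exchange (ltPairs V) subset_rfl

end KernelProd

/-! ### Random graphs sampled from a graphon -/

section Sampling

variable {V : Type*} {U W : ℝ → ℝ → ℝ}

/-- The edge probabilities of the random graph sampled from `W` with vertex labels `x`. -/
def edgeProb (W : ℝ → ℝ → ℝ) (x : V → ℝ) (p : V × V) : ℝ := W (x p.1) (x p.2)

theorem IsGraphon.pairWeight (hW : IsGraphon W) (F : SimpleGraph V) (p : V × V) :
    IsGraphon fun x y => pairWeight (fun _ => W x y) F p := by
  unfold _root_.pairWeight
  split_ifs
  · exact hW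
  · exact ⟨fun x y => congrArg (1 - ·) (hW.1 x y), measurable_const.sub hW.2.1,
      fun x y => Icc.mem_iff_one_sub_mem.1 (hW.mem_Icc x y)⟩

theorem IsGraphon.comp (hW : IsGraphon W) {σ : ℝ → ℝ} (hσ : Measurable σ) :
    IsGraphon fun x y => W (σ x) (σ y) :=
  ⟨fun _ _ => hW.1 _ _,
    hW.measurable.comp ((hσ.comp measurable_fst).prodMk (hσ.comp measurable_snd)),
    fun _ _ => hW.mem_Icc _ _⟩

theorem dCut_pairWeight (U W : ℝ → ℝ → ℝ) (F : SimpleGraph V) (p : V × V) :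
    dCut (fun x y => pairWeight (fun _ => U x y) F p) (fun x y => pairWeight (fun _ => W x y) F p) =
      dCut U W := by
  unfold pairWeight
  split_ifs
  · rfl
  · rw [dCut, dCut, ← cutNorm_neg]
    congr 1
    funext x y
    simp only [Pi.neg_apply]
    ring

theorem IsGraphon.edgeProb_mem_Icc (hW : IsGraphon W) (x : V → ℝ) (p : V × V) :
    edgeProb W x p ∈ Icc (0 : ℝ) 1 := hW.mem_Icc _ _

variable [Fintype V] [LinearOrder V]

theorem IsGraphon.integrable_graphWeight (hW : IsGraphon W) (F : SimpleGraph V) :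
    Integrable (fun x => graphWeight (edgeProb W x) F) (cubeMeasure V) :=
  integrable_kernelProd (s := ltPairs V) (hW.pairWeight F)

theorem inducedDensity_eq_integral {k : ℕ} (F : SimpleGraph (Fin k)) (W : ℝ → ℝ → ℝ) :
    inducedDensity F W = ∫ x, graphWeight (edgeProb W x) F ∂cubeMeasure (Fin k) := by
  have volume_restrict : volume.restrict (univ.pi fun _ => Icc 0 1) = cubeMeasure (Fin k) :=
    Measure.restrict_pi_pi _ _
  rw [inducedDensity, volume_restrict]
  simp only [graphWeight, ltPairs, Finset.prod_filter, Fintype.prod_prod_type]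
  rfl

theorem inducedDensity_comp {k : ℕ} (F : SimpleGraph (Fin k)) (hW : IsGraphon W) {σ : ℝ → ℝ}
    (hσ : IsMPSelf σ) : inducedDensity F (fun x y => W (σ x) (σ y)) = inducedDensity F W := by
  rw [inducedDensity_eq_integral, inducedDensity_eq_integral]
  exact integral_comp_of_measurePreserving
    (measurePreserving_pi (fun _ : Fin k => unitMeasure) (fun _ => unitMeasure) fun _ => hσ.1)
    (hW.integrable_graphWeight F).aestronglyMeasurable

theorem abs_inducedDensity_sub_le_dCut {k : ℕ} (F : SimpleGraph (Fin k)) (hU : IsGraphon U)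
    (hW : IsGraphon W) :
    |inducedDensity F U - inducedDensity F W| ≤ #(ltPairs (Fin k)) * dCut U W := by
  rw [inducedDensity_eq_integral, inducedDensity_eq_integral]
  have h := abs_integral_kernelProd_sub_le (hU.pairWeight F) (hW.pairWeight F)
  simp only [dCut_pairWeight, Finset.sum_const, nsmul_eq_mul] at h
  exact h

theorem abs_inducedDensity_sub_le_deltaCut {k : ℕ} (F : SimpleGraph (Fin k)) (hU : IsGraphon U)
    (hW : IsGraphon W) :
    |inducedDensity F U - inducedDensity F W| ≤ #(ltPairs (Fin k)) * deltaCut U W := by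
  rw [deltaCut, ← smul_eq_mul, ← Real.sInf_smul_of_nonneg (by positivity)]
  refine le_csInf ?_ ?_
  · exact Set.Nonempty.smul_set ⟨_, id, id, ⟨.id _, mapsTo_id _⟩, ⟨.id _, mapsTo_id _⟩, rfl⟩
  · rintro _ ⟨_, ⟨σ₁, σ₂, hσ₁, hσ₂, rfl⟩, rfl⟩
    rw [← inducedDensity_comp F hU hσ₁, ← inducedDensity_comp F hW hσ₂]
    exact abs_inducedDensity_sub_le_dCut F (hU.comp hσ₁.1.measurable) (hW.comp hσ₂.1.measurable)

end Sampling

/-! ### Hereditary classes and their limits -/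

theorem IsHereditary.comap_mem_of_injective {Q : GraphClass} (hQ : IsHereditary Q) {n N : ℕ}
    {v : Fin n → Fin N} (hv : Function.Injective v) {G : SimpleGraph (Fin N)} (hG : G ∈ Q N) :
    G.comap v ∈ Q n := by
  have sorted_mem : G.comap (v ∘ Tuple.sort v) ∈ Q n := hQ.2 n N _
    ((Tuple.monotone_sort v).strictMono_of_injective (hv.comp (Tuple.sort v).injective)) G hG
  have comap_eq : (G.comap (v ∘ Tuple.sort v)).comap (Tuple.sort v).symm = G.comap v := by
    ext a b
    simp
  exact comap_eq ▸ hQ.1 n (Tuple.sort v).symm _ sorted_mem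

theorem isGraphon_graphonOfGraph {n : ℕ} (G : SimpleGraph (Fin n)) :
    IsGraphon (graphonOfGraph G) := by
  classical
  refine ⟨fun x y => if_congr ?_ rfl rfl, ?_, fun x y => ?_⟩
  · constructor <;> exact fun ⟨i, j, hij, hx, hy⟩ => ⟨j, i, hij.symm, hy, hx⟩
  · have measurable_ceil_prod :
        Measurable fun p : ℝ × ℝ => (⌈(n : ℝ) * p.1⌉, ⌈(n : ℝ) * p.2⌉) := by fun_prop
    exact (Measurable.of_discrete (f := fun k : ℤ × ℤ => if ∃ i j : Fin n, G.Adj i j ∧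
      k.1 = ((i : ℕ) : ℤ) + 1 ∧ k.2 = ((j : ℕ) : ℤ) + 1 then (1 : ℝ) else 0)).comp
      measurable_ceil_prod
  · unfold graphonOfGraph
    split_ifs <;> simp

theorem graphWeight_adjIndicator_of_ne {V : Type*} [Fintype V] [LinearOrder V]
    {F G : SimpleGraph V} (hFG : F ≠ G) : graphWeight (adjIndicator G) F = 0 := by
  contrapose! hFG
  refine edgePairs_injective (Finset.ext fun p => ?_)
  simp only [mem_edgePairs]
  refine and_congr_right fun hp => ?_
  have pairWeight_ne_zero := Finset.prod_ne_zero_iff.1 hFG p (mem_ltPairs.2 hp)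
  unfold pairWeight adjIndicator at pairWeight_ne_zero
  split_ifs at pairWeight_ne_zero <;> simp_all

theorem edgeProb_graphonOfGraph {V : Type*} {N : ℕ} [NeZero N] (G : SimpleGraph (Fin N))
    {x : V → ℝ} (hx : ∀ i, x i ∈ Ioc (0 : ℝ) 1) :
    edgeProb (graphonOfGraph G) x = adjIndicator (G.comap fun i => gridIndex N (x i)) :=
  funext fun _ => graphonOfGraph_eq_stepKernel G (hx _) (hx _)

/-- The indicator that two labels lie in the same cell of the grid of mesh `1/N`. -/
def sameCell (N : ℕ) [NeZero N] : ℝ → ℝ → ℝ :=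
  stepKernel fun k : Fin N × Fin N => if k.1 = k.2 then 1 else 0

theorem sameCell_nonneg (N : ℕ) [NeZero N] (x y : ℝ) : 0 ≤ sameCell N x y := by
  unfold sameCell stepKernel
  positivity

theorem isGraphon_sameCell (N : ℕ) [NeZero N] : IsGraphon (sameCell N) :=
  isGraphon_stepKernel (fun p => if_congr eq_comm rfl rfl) fun p => by split_ifs <;> simp

theorem integral_sameCell (N : ℕ) [NeZero N] :
    ∫ p, sameCell N p.1 p.2 ∂squareMeasure = 1 / N := by
  have hN : (N : ℝ) ≠ 0 := NeZero.ne _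
  rw [sameCell, integral_stepKernel, Fintype.sum_prod_type]
  simp only [Finset.sum_ite_eq, Finset.mem_univ, if_true, Finset.sum_const, Finset.card_univ,
    Fintype.card_fin, nsmul_eq_mul]
  field_simp

theorem graphWeight_edgeProb_graphonOfGraph_le {Q : GraphClass} (hQ : IsHereditary Q) {n N : ℕ}
    [NeZero N] {F : SimpleGraph (Fin n)} (hF : F ∉ Q n) {G : SimpleGraph (Fin N)} (hG : G ∈ Q N)
    {x : Fin n → ℝ} (hx : ∀ i, x i ∈ Ioc (0 : ℝ) 1) :
    graphWeight (edgeProb (graphonOfGraph G) x) F ≤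
      ∑ p ∈ ltPairs (Fin n), sameCell N (x p.1) (x p.2) := by
  have sameCell_nonneg (p : Fin n × Fin n) (_ : p ∈ ltPairs (Fin n)) :
      0 ≤ sameCell N (x p.1) (x p.2) := sameCell_nonneg N _ _
  by_cases hv : Function.Injective fun i => gridIndex N (x i)
  · have hne : F ≠ G.comap fun i => gridIndex N (x i) := by
      rintro rfl
      exact hF (hQ.comap_mem_of_injective hv hG)
    rw [edgeProb_graphonOfGraph G hx, graphWeight_adjIndicator_of_ne hne]
    exact Finset.sum_nonneg sameCell_nonneg
  · obtain ⟨i, j, hij, hlt⟩ : ∃ i j, gridIndex N (x i) = gridIndex N (x j) ∧ i < j := by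
      simp only [Function.Injective, not_forall] at hv
      obtain ⟨i, j, hij, hne⟩ := hv
      exact (lt_or_gt_of_ne hne).elim (⟨i, j, hij, ·⟩) (⟨j, i, hij.symm, ·⟩)
    calc graphWeight (edgeProb (graphonOfGraph G) x) F
        ≤ 1 := (graphWeight_mem_Icc ((isGraphon_graphonOfGraph G).edgeProb_mem_Icc x) F).2
      _ = sameCell N (x i) (x j) := (if_pos hij).symm
      _ ≤ _ := Finset.single_le_sum (f := fun p : Fin n × Fin n => sameCell N (x p.1) (x p.2))
        sameCell_nonneg (mem_ltPairs.2 hlt : (i, j) ∈ ltPairs (Fin n))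

theorem inducedDensity_graphonOfGraph_le {Q : GraphClass} (hQ : IsHereditary Q) {n N : ℕ}
    [NeZero N] {F : SimpleGraph (Fin n)} (hF : F ∉ Q n) {G : SimpleGraph (Fin N)} (hG : G ∈ Q N) :
    inducedDensity F (graphonOfGraph G) ≤ #(ltPairs (Fin n)) * (1 / N) := by
  have labels_mem_Ioc : ∀ᵐ x ∂cubeMeasure (Fin n), ∀ i, x i ∈ Ioc (0 : ℝ) 1 :=
    eventually_all.2 fun i =>
      (Measure.quasiMeasurePreserving_eval (fun _ : Fin n => unitMeasure) i).ae
        ae_unitMeasure_mem_Ioc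
  have integrable_sameCell (p : Fin n × Fin n) (hp : p ∈ ltPairs (Fin n)) :
      Integrable (fun x : Fin n → ℝ => sameCell N (x p.1) (x p.2)) (cubeMeasure (Fin n)) :=
    (measurePreserving_eval_pair (fun _ : Fin n => unitMeasure)
      (mem_ltPairs.1 hp).ne).integrable_comp_of_integrable (isGraphon_sameCell N).integrable
  calc inducedDensity F (graphonOfGraph G)
      = ∫ x, graphWeight (edgeProb (graphonOfGraph G) x) F ∂cubeMeasure (Fin n) :=
        inducedDensity_eq_integral F _
    _ ≤ ∫ x, ∑ p ∈ ltPairs (Fin n), sameCell N (x p.1) (x p.2) ∂cubeMeasure (Fin n) :=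
        integral_mono_ae ((isGraphon_graphonOfGraph G).integrable_graphWeight F)
          (integrable_finsetSum _ integrable_sameCell) (labels_mem_Ioc.mono fun x hx =>
            graphWeight_edgeProb_graphonOfGraph_le hQ hF hG hx)
    _ = ∑ p ∈ ltPairs (Fin n), ∫ x, sameCell N (x p.1) (x p.2) ∂cubeMeasure (Fin n) :=
        integral_finsetSum _ integrable_sameCell
    _ = ∑ p ∈ ltPairs (Fin n), (1 / N : ℝ) := Finset.sum_congr rfl fun p hp =>
        (integral_cubeMeasure_pair (mem_ltPairs.1 hp).ne
          (isGraphon_sameCell N).integrable.aestronglyMeasurable).trans (integral_sameCell N)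
    _ = #(ltPairs (Fin n)) * (1 / N) := by rw [Finset.sum_const, nsmul_eq_mul]

theorem inducedDensity_eq_zero_of_mem_limitSet {Q : GraphClass} (hQ : IsHereditary Q)
    {W : ℝ → ℝ → ℝ} (hW : W ∈ limitSet Q) {n : ℕ} {F : SimpleGraph (Fin n)} (hF : F ∉ Q n) :
    inducedDensity F W = 0 := by
  obtain ⟨isGraphon, N, G, hG, hN, tendsto_deltaCut⟩ := hW
  refine le_antisymm ?_ ?_
  · have tendsto_bound : Tendsto (fun k => (#(ltPairs (Fin n)) : ℝ) * (1 / (N k : ℝ)) +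
        #(ltPairs (Fin n)) * deltaCut (graphonOfGraph (G k)) W) atTop (𝓝 0) := by
      simpa using ((tendsto_one_div_atTop_nhds_zero_nat (𝕜 := ℝ)).comp hN).const_mul
        (#(ltPairs (Fin n)) : ℝ) |>.add (tendsto_deltaCut.const_mul (#(ltPairs (Fin n)) : ℝ))
    refine ge_of_tendsto tendsto_bound ((hN.eventually_ge_atTop 1).mono fun k hk => ?_)
    have : NeZero (N k) := ⟨by lia⟩
    have density_le := inducedDensity_graphonOfGraph_le hQ hF (hG k)
    have counting := abs_le.1 <|
      abs_inducedDensity_sub_le_deltaCut F (isGraphon_graphonOfGraph (G k)) isGraphon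
    linarith [counting.1]
  · rw [inducedDensity_eq_integral]
    exact integral_nonneg fun x => (graphWeight_mem_Icc (isGraphon.edgeProb_mem_Icc x) F).1

theorem ae_graphWeight_eq_zero_of_mem_limitSet {Q : GraphClass} (hQ : IsHereditary Q)
    {W : ℝ → ℝ → ℝ} (hW : W ∈ limitSet Q) (n : ℕ) :
    ∀ᵐ x ∂cubeMeasure (Fin n), ∀ F ∉ Q n, graphWeight (edgeProb W x) F = 0 := by
  refine eventually_all.2 fun F => eventually_imp_distrib_left.2 fun hF => ?_
  have integral_eq_zero := inducedDensity_eq_zero_of_mem_limitSet hQ hW hF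
  rw [inducedDensity_eq_integral, integral_eq_zero_iff_of_nonneg
    (fun x => (graphWeight_mem_Icc (hW.1.edgeProb_mem_Icc x) F).1)
    (hW.1.integrable_graphWeight F)] at integral_eq_zero
  exact integral_eq_zero

/-! ### The entropy of a random graph -/

theorem binEnt_of_eq_zero_or_eq_one {t : ℝ} (ht : t = 0 ∨ t = 1) : binEnt t = 0 := by
  rcases ht with rfl | rfl <;> simp [binEnt]

open Classical in
/-- The edge probabilities of the uniformly random graph on the support of the random graph model
with edge probabilities `q`: all probabilities other than `0` and `1` are replaced by `1/2`. -/
def fairProb {ι : Type*} (q : ι → ℝ) (p : ι) : ℝ := if q p = 0 ∨ q p = 1 then q p else 1 / 2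

section RandomGraph

variable {V : Type*} {q : V × V → ℝ}

theorem pairWeight_fairProb_mem_Icc {p : V × V} (hq : q p ∈ Icc (0 : ℝ) 1) (F : SimpleGraph V) :
    pairWeight (fairProb q) F p ∈ Icc (0 : ℝ) (2 ^ (-binEnt (q p))) := by
  by_cases hp : q p = 0 ∨ q p = 1
  · have fairProb_mem_Icc : fairProb q p ∈ Icc (0 : ℝ) 1 := by simpa only [fairProb, if_pos hp]
    simpa [binEnt_of_eq_zero_or_eq_one hp] using pairWeight_mem_Icc fairProb_mem_Icc F
  · have pairWeight_eq : pairWeight (fairProb q) F p = 2 ^ (-1 : ℝ) := by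
      simp only [pairWeight, fairProb, hp, if_false, Real.rpow_neg_one]
      norm_num
    rw [pairWeight_eq]
    exact ⟨by positivity,
      Real.rpow_le_rpow_of_exponent_le one_le_two (neg_le_neg (binEnt_le_one _))⟩

variable [Fintype V] [LinearOrder V]

theorem graphWeight_fairProb_le (hq : ∀ p, q p ∈ Icc (0 : ℝ) 1) (F : SimpleGraph V) :
    graphWeight (fairProb q) F ≤ 2 ^ (-∑ p ∈ ltPairs V, binEnt (q p)) := by
  rw [← Finset.sum_neg_distrib, Real.rpow_sum_of_pos two_pos]
  exact Finset.prod_le_prod (fun p _ => (pairWeight_fairProb_mem_Icc (hq p) F).1)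
    fun p _ => (pairWeight_fairProb_mem_Icc (hq p) F).2

theorem graphWeight_fairProb_eq_zero {F : SimpleGraph V} (hF : graphWeight q F = 0) :
    graphWeight (fairProb q) F = 0 := by
  obtain ⟨p, hp, pairWeight_eq⟩ := Finset.prod_eq_zero_iff.1 hF
  refine Finset.prod_eq_zero hp ?_
  have hqp : q p = 0 ∨ q p = 1 := by
    unfold pairWeight at pairWeight_eq
    split_ifs at pairWeight_eq
    exacts [.inl pairWeight_eq, .inr (sub_eq_zero.1 pairWeight_eq).symm]
  rwa [pairWeight, fairProb, if_pos hqp]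

theorem two_rpow_sum_binEnt_le_card (hq : ∀ p, q p ∈ Icc (0 : ℝ) 1) {S : Set (SimpleGraph V)}
    (hS : ∀ F ∉ S, graphWeight q F = 0) :
    (2 : ℝ) ^ (∑ p ∈ ltPairs V, binEnt (q p)) ≤ Nat.card S := by
  classical
  have one_le : (1 : ℝ) ≤ Nat.card S * 2 ^ (-∑ p ∈ ltPairs V, binEnt (q p)) := by
    calc (1 : ℝ) = ∑ F, graphWeight (fairProb q) F := (sum_graphWeight _).symm
      _ = ∑ F ∈ S.toFinset, graphWeight (fairProb q) F :=
          (Finset.sum_subset (Finset.subset_univ _) fun F _ hF =>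
            graphWeight_fairProb_eq_zero (hS F (by simpa using hF))).symm
      _ ≤ #S.toFinset • 2 ^ (-∑ p ∈ ltPairs V, binEnt (q p)) :=
          Finset.sum_le_card_nsmul _ _ _ fun F _ => graphWeight_fairProb_le hq F
      _ = _ := by rw [nsmul_eq_mul, Set.toFinset_card, Nat.card_eq_fintype_card]
  rwa [Real.rpow_neg two_pos.le, ← div_eq_mul_inv, one_le_div (by positivity)] at one_le

end RandomGraph

theorem card_ltPairs (n : ℕ) : (#(ltPairs (Fin n)) : ℝ) = choose2 n := by
  have card_eq_sum : #(ltPairs (Fin n)) = ∑ j ∈ Finset.range n, j := by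
    rw [ltPairs, Finset.card_filter, Fintype.sum_prod_type_right, ← Fin.sum_univ_eq_sum_range]
    refine Fintype.sum_congr _ _ fun j => ?_
    rw [← Finset.card_filter, Finset.filter_gt_eq_Iio, Fin.card_Iio]
  have card_mul_two : (#(ltPairs (Fin n)) : ℝ) * 2 = n * ((n - 1 : ℕ) : ℝ) := by
    exact_mod_cast card_eq_sum ▸ Finset.sum_range_id_mul_two n
  rw [choose2, eq_div_iff two_ne_zero, card_mul_two]
  rcases n with _ | n <;> simp

section SampledEntropy

variable {W : ℝ → ℝ → ℝ}

theorem IsGraphon.integrable_binEnt_edgeProb (hW : IsGraphon W) {V : Type*} [Fintype V]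
    {p : V × V} (hp : p.1 ≠ p.2) :
    Integrable (fun x => binEnt (edgeProb W x p)) (cubeMeasure V) :=
  (measurePreserving_eval_pair (fun _ : V => unitMeasure) hp).integrable_comp_of_integrable
    (hW.integrable_comp continuous_binEnt)

theorem IsGraphon.integral_sum_binEnt_edgeProb (hW : IsGraphon W) (n : ℕ) :
    ∫ x, ∑ p ∈ ltPairs (Fin n), binEnt (edgeProb W x p) ∂cubeMeasure (Fin n) =
      graphonEnt W * choose2 n := by
  have integral_pair (p : Fin n × Fin n) (hp : p ∈ ltPairs (Fin n)) :
      ∫ x, binEnt (edgeProb W x p) ∂cubeMeasure (Fin n) = graphonEnt W :=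
    (integral_cubeMeasure_pair (mem_ltPairs.1 hp).ne
      (hW.integrable_comp continuous_binEnt).aestronglyMeasurable).trans
      (graphonEnt_eq_integral hW).symm
  rw [integral_finsetSum _ fun p hp => hW.integrable_binEnt_edgeProb (mem_ltPairs.1 hp).ne,
    Finset.sum_congr rfl integral_pair, Finset.sum_const, nsmul_eq_mul, card_ltPairs, mul_comm]

/-- The graph sampled from a limit of `Q` almost surely lies in `Q`, so its conditional entropy
given the vertex labels, whose mean is `graphonEnt W * choose2 n`, is at most `log₂ |Q n|`. -/
theorem two_rpow_graphonEnt_mul_choose2_le_card {Q : GraphClass} (hQ : IsHereditary Q)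
    (hW : W ∈ limitSet Q) (n : ℕ) : (2 : ℝ) ^ (graphonEnt W * choose2 n) ≤ Nat.card (Q n) := by
  obtain ⟨x, hx, expectation_le⟩ := exists_notMem_null_integral_le
    (integrable_finsetSum _ fun p hp => hW.1.integrable_binEnt_edgeProb (mem_ltPairs.1 hp).ne)
    (ae_iff.1 (ae_graphWeight_eq_zero_of_mem_limitSet hQ hW n))
  rw [hW.1.integral_sum_binEnt_edgeProb] at expectation_le
  exact (Real.rpow_le_rpow_of_exponent_le one_le_two expectation_le).trans <|
    two_rpow_sum_binEnt_le_card (hW.1.edgeProb_mem_Icc x) (not_not.1 hx)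

end SampledEntropy

/-! ### The growth of a hereditary class -/

/-- Theorem 1.4: for a hereditary class `Q`,
`lim_n log₂|Q_n| / C(n,2) = sup_{W ∈ Q̂} Ent(W)`. -/
theorem stmt11 (Q : GraphClass) (hQ : IsHereditary Q) (hne : (limitSet Q).Nonempty) :
    ∀ ε : ℝ, 0 < ε → ∃ N : ℕ, ∀ n ≥ N,
      (2 : ℝ) ^ ((sSup (graphonEnt '' limitSet Q) - ε) * choose2 n) ≤
          (Nat.card ↥(Q n) : ℝ) ∧
        (Nat.card ↥(Q n) : ℝ) ≤
          (2 : ℝ) ^ ((sSup (graphonEnt '' limitSet Q) + ε) * choose2 n) := by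
  intro ε hε
  have bddAbove : BddAbove (graphonEnt '' limitSet Q) :=
    ⟨1, forall_mem_image.2 fun U hU => graphonEnt_le_one hU.1⟩
  obtain ⟨_, ⟨W, hW, rfl⟩, sub_lt_ent⟩ :=
    exists_lt_of_lt_csSup (hne.image graphonEnt) (sub_lt_self _ hε)
  obtain ⟨N, upper⟩ := eventually_atTop.1 <| eventually_card_le_two_rpow hQ.1 fun U hU =>
    (le_csSup bddAbove (mem_image_of_mem _ hU)).trans_lt (lt_add_of_pos_right _ hε)
  refine ⟨N, fun n hn => ⟨?_, upper n hn⟩⟩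
  have choose2_nonneg : 0 ≤ choose2 n := card_ltPairs n ▸ Nat.cast_nonneg _
  calc (2 : ℝ) ^ ((sSup (graphonEnt '' limitSet Q) - ε) * choose2 n)
      ≤ 2 ^ (graphonEnt W * choose2 n) := Real.rpow_le_rpow_of_exponent_le one_le_two
        (mul_le_mul_of_nonneg_right sub_lt_ent.le choose2_nonneg)
    _ ≤ Nat.card (Q n) := two_rpow_graphonEnt_mul_choose2_le_card hQ hW n

end
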